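/- For every n ≥ 2, the covering type of the compact symplectic group Sp(n) satisfies ct(Sp(n)) ≥ (8n³ + 9n² + 7n + 12)/6; that is, for every topological space Y homotopy equivalent to Sp(n) and every good cover U of Y, U has at least (8n³ + 9n² + 7n + 12)/6 members. -/

import Mathlib

/-- A good cover of `Y`: a finite family of open subsets covering `Y` such that every
nonempty intersection of (finitely many) members is contractible. -/
def IsGoodCover {Y : Type*} [TopologicalSpace Y] (U : Finset (Set Y)) : Prop :=
  (∀ s ∈ U, IsOpen s) ∧ (⋃₀ (U : Set (Set Y)) = Set.univ) ∧
    ∀ T ⊆ U, T.Nonempty → (⋂₀ (T : Set (Set Y))).Nonempty →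
      ContractibleSpace ↥(⋂₀ (T : Set (Set Y)))

/-- The compact symplectic group `Sp(n)`: `n×n` quaternionic matrices with `Aᴴ·A = 1`
(where `star` is the conjugate transpose), with the subspace topology. -/
def Sp (n : ℕ) : Type :=
  { A : Matrix (Fin n) (Fin n) (Quaternion ℝ) // star A * A = 1 }

noncomputable instance (n : ℕ) : TopologicalSpace (Sp n) :=
  inferInstanceAs (TopologicalSpace
    { A : Matrix (Fin n) (Fin n) (Quaternion ℝ) // star A * A = 1 })

section part1
namespace CT

/-! ### tuple chains mod 2 -/
abbrev Ch (E : Type*) (l : ℕ) := (Fin l → E) →₀ ZMod 2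

theorem z2 {M : Type*} [AddCommGroup M] [Module (ZMod 2) M] (x : M) : x + x = 0 := by
  have : (2 : ZMod 2) • x = 0 := by
    have h2 : (2 : ZMod 2) = 0 := by decide
    rw [h2, zero_smul]
  rwa [two_smul] at this

section tuples
variable {E E' : Type*}

noncomputable def tmap (f : E → E') (l : ℕ) : Ch E l →ₗ[ZMod 2] Ch E' l :=
  Finsupp.lmapDomain _ _ (fun v => f ∘ v)

@[simp] theorem tmap_single (f : E → E') (l : ℕ) (v : Fin l → E) :
    tmap f l (Finsupp.single v 1) = Finsupp.single (f ∘ v) 1 := by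
  simp [tmap]

noncomputable def bd (l : ℕ) : Ch E (l + 1) →ₗ[ZMod 2] Ch E l :=
  Finsupp.linearCombination (ZMod 2) (fun v => ∑ i : Fin (l + 1), Finsupp.single (v ∘ i.succAbove) 1)

theorem bd_single (l : ℕ) (v : Fin (l + 1) → E) :
    bd l (Finsupp.single v 1) = ∑ i : Fin (l + 1), Finsupp.single (v ∘ i.succAbove) 1 := by
  simp [bd]

noncomputable def cone (e : E) (l : ℕ) : Ch E l →ₗ[ZMod 2] Ch E (l + 1) :=
  Finsupp.lmapDomain _ _ (fun v => (Fin.cons e v : Fin (l + 1) → E))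

@[simp] theorem cone_single (e : E) (l : ℕ) (v : Fin l → E) :
    cone e l (Finsupp.single v 1) = Finsupp.single (Fin.cons e v : Fin (l + 1) → E) 1 := by
  simp [cone]

theorem ch_ext {M : Type*} [AddCommGroup M] [Module (ZMod 2) M] {l : ℕ} {f g : Ch E l →ₗ[ZMod 2] M}
    (h : ∀ v, f (Finsupp.single v 1) = g (Finsupp.single v 1)) (c : Ch E l) : f c = g c := by
  have : f = g := by
    apply Finsupp.lhom_ext'
    intro v
    apply LinearMap.ext_ring
    simpa using h v
  rw [this]

theorem bd_cone (e : E) (l : ℕ) (c : Ch E (l + 1)) :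
    bd (l + 1) (cone e (l + 1) c) = c + cone e l (bd l c) := by
  refine ch_ext (f := bd (l + 1) ∘ₗ cone e (l + 1)) (g := LinearMap.id + cone e l ∘ₗ bd l) ?_ c
  intro v
  simp only [LinearMap.comp_apply, cone_single, LinearMap.add_apply, LinearMap.id_apply, bd_single,
    map_sum]
  rw [Fin.sum_univ_succ]
  congr 1
  apply Finset.sum_congr rfl
  intro i _
  congr 1
  funext j
  refine Fin.cases ?_ (fun j => ?_) j <;> simp

theorem bd_cone_zero (e : E) (c : Ch E 0) : bd 0 (cone e 0 c) = c := by
  refine ch_ext (f := bd 0 ∘ₗ cone e 0) (g := LinearMap.id) ?_ c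
  intro v
  simp [bd_single]

theorem bd_bd (l : ℕ) (c : Ch E (l + 2)) : bd l (bd (l + 1) c) = 0 := by
  induction l with
  | zero =>
    refine ch_ext (f := bd 0 ∘ₗ bd 1) (g := 0) ?_ c
    intro v
    simp only [LinearMap.comp_apply, bd_single, Fin.sum_univ_succ,
      LinearMap.zero_apply]
    have h (a b : Fin 1 → E) : (bd 0 (Finsupp.single a 1) : Ch E 0) = bd 0 (Finsupp.single b 1) := by
      rw [bd_single, bd_single]
      apply Finset.sum_congr rfl
      intro i _
      congr 1
      exact Subsingleton.elim _ _
    simp only [Finset.univ_eq_empty, Finset.sum_empty, add_zero]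
    rw [map_add, h (v ∘ Fin.succAbove 0) (v ∘ Fin.succAbove (Fin.succ 0)) ]
    exact z2 _
  | succ l ih =>
    refine ch_ext (f := bd (l+1) ∘ₗ bd (l+2)) (g := 0) ?_ c
    intro v
    have : (Finsupp.single v 1 : Ch E (l+3)) = cone (v 0) _ (Finsupp.single (Fin.tail v) 1) := by
      simp
    simp only [LinearMap.comp_apply, LinearMap.zero_apply]
    rw [this, bd_cone, map_add, bd_cone, ih, map_zero, add_zero]
    exact z2 _

theorem tmap_bd (f : E → E') (l : ℕ) (c : Ch E (l + 1)) :
    tmap f l (bd l c) = bd l (tmap f (l + 1) c) := by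
  refine ch_ext (f := tmap f l ∘ₗ bd l) (g := bd l ∘ₗ tmap f (l + 1)) ?_ c
  intro v
  simp [bd_single]
  rfl

theorem tmap_cone (f : E → E') (e : E) (l : ℕ) (c : Ch E l) :
    tmap f (l + 1) (cone e l c) = cone (f e) l (tmap f l c) := by
  refine ch_ext (f := tmap f (l + 1) ∘ₗ cone e l) (g := cone (f e) l ∘ₗ tmap f l) ?_ c
  intro v
  simp
  congr 1
  funext j
  refine Fin.cases ?_ (fun j => ?_) j <;> simp

/-- generic homotopy operator -/
noncomputable def hom (b : ∀ l, (Fin (l + 1) → E) → E') (φ ψ : ∀ l, Ch E l →ₗ[ZMod 2] Ch E' l) :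
    ∀ l, Ch E l →ₗ[ZMod 2] Ch E' (l + 1)
  | 0 => 0
  | l + 1 => Finsupp.linearCombination (ZMod 2) (fun v => cone (b l v) (l + 1)
      (φ (l + 1) (Finsupp.single v 1) + ψ (l + 1) (Finsupp.single v 1)
        + hom b φ ψ l (bd l (Finsupp.single v 1))))

theorem hom_single (b : ∀ l, (Fin (l + 1) → E) → E') (φ ψ : ∀ l, Ch E l →ₗ[ZMod 2] Ch E' l)
    (l : ℕ) (v) : hom b φ ψ (l + 1) (Finsupp.single v 1) = cone (b l v) (l + 1)
      (φ (l + 1) (Finsupp.single v 1) + ψ (l + 1) (Finsupp.single v 1)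
        + hom b φ ψ l (bd l (Finsupp.single v 1))) := by
  simp [hom]

theorem bd_hom (b : ∀ l, (Fin (l + 1) → E) → E') (φ ψ : ∀ l, Ch E l →ₗ[ZMod 2] Ch E' l)
    (h0 : ∀ c, φ 0 c = ψ 0 c)
    (hφ : ∀ l c, bd l (φ (l + 1) c) = φ l (bd l c))
    (hψ : ∀ l c, bd l (ψ (l + 1) c) = ψ l (bd l c)) (l : ℕ) (c : Ch E (l + 1)) :
    bd (l + 1) (hom b φ ψ (l + 1) c) + hom b φ ψ l (bd l c) = φ (l + 1) c + ψ (l + 1) c := by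
  induction l with
  | zero =>
    refine ch_ext (f := bd 1 ∘ₗ hom b φ ψ 1 + hom b φ ψ 0 ∘ₗ bd 0) (g := φ 1 + ψ 1) ?_ c
    intro v
    simp only [LinearMap.add_apply, LinearMap.comp_apply]
    rw [hom_single, bd_cone]
    simp only [map_add, hφ, hψ, h0]
    simp [hom, z2]
  | succ l ih =>
    refine ch_ext (f := bd _ ∘ₗ hom b φ ψ _ + hom b φ ψ _ ∘ₗ bd _) (g := φ _ + ψ _) ?_ c
    intro v
    simp only [LinearMap.add_apply, LinearMap.comp_apply]
    rw [hom_single, bd_cone]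
    have h1 := ih (bd (l+1) (Finsupp.single v 1))
    rw [bd_bd, map_zero, add_zero] at h1
    rw [map_add (bd (l + 1)), h1, map_add (bd (l + 1)), hφ, hψ, z2, map_zero, add_zero]
    generalize φ (l + 1 + 1) (Finsupp.single v 1) = x
    generalize ψ (l + 1 + 1) (Finsupp.single v 1) = y
    generalize hom b φ ψ (l + 1) (bd (l + 1) (Finsupp.single v 1)) = z
    rw [add_assoc (x + y) z z, z2, add_zero]

theorem tmap_hom {F F' : Type*} (f : E → F) (f' : E' → F')
    (b : ∀ l, (Fin (l + 1) → E) → E') (φ ψ : ∀ l, Ch E l →ₗ[ZMod 2] Ch E' l)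
    (b2 : ∀ l, (Fin (l + 1) → F) → F') (φ2 ψ2 : ∀ l, Ch F l →ₗ[ZMod 2] Ch F' l)
    (hb : ∀ l v, f' (b l v) = b2 l (f ∘ v))
    (hφ : ∀ l c, tmap f' l (φ l c) = φ2 l (tmap f l c))
    (hψ : ∀ l c, tmap f' l (ψ l c) = ψ2 l (tmap f l c)) (l : ℕ) (c : Ch E l) :
    tmap f' (l + 1) (hom b φ ψ l c) = hom b2 φ2 ψ2 l (tmap f l c) := by
  induction l with
  | zero => simp [hom]
  | succ l ih =>
    refine ch_ext (f := tmap f' _ ∘ₗ hom b φ ψ _) (g := hom b2 φ2 ψ2 _ ∘ₗ tmap f _) ?_ c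
    intro v
    simp only [LinearMap.comp_apply]
    rw [hom_single, tmap_cone, hb, tmap_single, hom_single]
    simp only [map_add, ih, tmap_bd, hφ, hψ, tmap_single]

/-- subdivision -/
noncomputable def sd (b : ∀ l, (Fin (l + 1) → E) → E) : ∀ l, Ch E l →ₗ[ZMod 2] Ch E l
  | 0 => LinearMap.id
  | l + 1 => Finsupp.linearCombination (ZMod 2) (fun v => cone (b l v) l
      (sd b l (bd l (Finsupp.single v 1))))

theorem sd_single (b : ∀ l, (Fin (l + 1) → E) → E) (l : ℕ) (v) :
    sd b (l + 1) (Finsupp.single v 1) = cone (b l v) l (sd b l (bd l (Finsupp.single v 1))) := by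
  simp [sd]

theorem bd_sd (b : ∀ l, (Fin (l + 1) → E) → E) (l : ℕ) (c : Ch E (l + 1)) :
    bd l (sd b (l + 1) c) = sd b l (bd l c) := by
  induction l with
  | zero =>
    refine ch_ext (f := bd _ ∘ₗ sd b _) (g := sd b _ ∘ₗ bd _) ?_ c
    intro v
    simp only [LinearMap.comp_apply]
    rw [sd_single, bd_cone_zero]
  | succ l ih =>
    refine ch_ext (f := bd _ ∘ₗ sd b _) (g := sd b _ ∘ₗ bd _) ?_ c
    intro v
    simp only [LinearMap.comp_apply]
    rw [sd_single, bd_cone, ih, bd_bd, map_zero, map_zero, add_zero]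

theorem tmap_sd (f : E → E') (b : ∀ l, (Fin (l + 1) → E) → E) (b' : ∀ l, (Fin (l + 1) → E') → E')
    (hb : ∀ l v, f (b l v) = b' l (f ∘ v)) (l : ℕ) (c : Ch E l) :
    tmap f l (sd b l c) = sd b' l (tmap f l c) := by
  induction l with
  | zero => simp [sd]
  | succ l ih =>
    refine ch_ext (f := tmap f _ ∘ₗ sd b _) (g := sd b' _ ∘ₗ tmap f _) ?_ c
    intro v
    simp only [LinearMap.comp_apply]
    rw [sd_single, tmap_cone, hb, ih, tmap_bd, tmap_single, sd_single]

/-- iterated subdivision and the homotopy -/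
noncomputable def sdm (b : ∀ l, (Fin (l + 1) → E) → E) (m : ℕ) (l : ℕ) : Ch E l →ₗ[ZMod 2] Ch E l :=
  (sd b l) ^ m

noncomputable def tt (b : ∀ l, (Fin (l + 1) → E) → E) := hom b (fun _ => LinearMap.id) (sd b)

noncomputable def dm (b : ∀ l, (Fin (l + 1) → E) → E) (m : ℕ) (l : ℕ) (c : Ch E l) : Ch E (l + 1) :=
  ∑ i ∈ Finset.range m, tt b l (sdm b i l c)

theorem bd_tt (b : ∀ l, (Fin (l + 1) → E) → E) (l : ℕ) (c : Ch E (l + 1)) :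
    bd (l + 1) (tt b (l + 1) c) + tt b l (bd l c) = c + sd b (l + 1) c :=
  bd_hom b (fun _ => LinearMap.id) (sd b) (fun c => rfl) (fun _ _ => rfl) (bd_sd b) l c

theorem sdm_succ (b : ∀ l, (Fin (l + 1) → E) → E) (m l : ℕ) (c : Ch E l) :
    sdm b (m + 1) l c = sd b l (sdm b m l c) := by
  simp [sdm, pow_succ']

theorem bd_sdm (b : ∀ l, (Fin (l + 1) → E) → E) (m l : ℕ) (c : Ch E (l + 1)) :
    bd l (sdm b m (l + 1) c) = sdm b m l (bd l c) := by
  induction m with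
  | zero => simp [sdm]
  | succ m ih => rw [sdm_succ, bd_sd, ih, sdm_succ]

theorem bd_dm (b : ∀ l, (Fin (l + 1) → E) → E) (m : ℕ) (l : ℕ) (c : Ch E (l + 1)) :
    bd (l + 1) (dm b m (l + 1) c) + dm b m l (bd l c) = c + sdm b m (l + 1) c := by
  induction m with
  | zero => simp [dm, sdm, z2]
  | succ m ih =>
    have h := bd_tt b l (sdm b m (l + 1) c)
    unfold dm at ih ⊢
    rw [Finset.sum_range_succ, Finset.sum_range_succ, map_add, ← bd_sdm b m]
    calc _ = (bd (l + 1) (∑ i ∈ Finset.range m, tt b (l + 1) (sdm b i (l + 1) c))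
          + ∑ i ∈ Finset.range m, tt b l (sdm b i l (bd l c))) +
          (bd (l + 1) (tt b (l + 1) (sdm b m (l + 1) c)) + tt b l (bd l (sdm b m (l + 1) c))) := by
            abel
      _ = _ := by
        rw [ih, h, sdm_succ]
        rw [add_assoc, ← add_assoc (sdm b m (l + 1) c), z2, zero_add]

theorem tmap_sdm (f : E → E') (b : ∀ l, (Fin (l + 1) → E) → E) (b' : ∀ l, (Fin (l + 1) → E') → E')
    (hb : ∀ l v, f (b l v) = b' l (f ∘ v)) (m l : ℕ) (c : Ch E l) :
    tmap f l (sdm b m l c) = sdm b' m l (tmap f l c) := by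
  induction m with
  | zero => simp [sdm]
  | succ m ih => rw [sdm_succ, tmap_sd f b b' hb, ih, sdm_succ]

theorem tmap_tt (f : E → E') (b : ∀ l, (Fin (l + 1) → E) → E) (b' : ∀ l, (Fin (l + 1) → E') → E')
    (hb : ∀ l v, f (b l v) = b' l (f ∘ v)) (l : ℕ) (c : Ch E l) :
    tmap f (l + 1) (tt b l c) = tt b' l (tmap f l c) :=
  tmap_hom f f b _ _ b' _ _ hb (fun _ _ => rfl) (tmap_sd f b b' hb) l c

theorem tmap_dm (f : E → E') (b : ∀ l, (Fin (l + 1) → E) → E) (b' : ∀ l, (Fin (l + 1) → E') → E')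
    (hb : ∀ l v, f (b l v) = b' l (f ∘ v)) (m l : ℕ) (c : Ch E l) :
    tmap f (l + 1) (dm b m l c) = dm b' m l (tmap f l c) := by
  simp only [dm, map_sum, tmap_tt f b b' hb, tmap_sdm f b b' hb]

/-- all tuples in the support satisfy `Q` -/
def All {l : ℕ} (Q : (Fin l → E) → Prop) (c : Ch E l) : Prop := ∀ v ∈ c.support, Q v

theorem All.add {l : ℕ} {Q : (Fin l → E) → Prop} {c d : Ch E l} (hc : All Q c) (hd : All Q d) :
    All Q (c + d) := by
  classical
  intro v hv
  rcases Finset.mem_union.1 (Finsupp.support_add hv) with h | h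
  · exact hc v h
  · exact hd v h

theorem All.zero {l : ℕ} {Q : (Fin l → E) → Prop} : All Q (0 : Ch E l) := by
  intro v hv; simp at hv

theorem All.single {l : ℕ} {Q : (Fin l → E) → Prop} {v} (h : Q v) :
    All Q (Finsupp.single v 1 : Ch E l) := by
  intro w hw
  have := Finsupp.support_single_subset hw
  simp at this
  rwa [this]

theorem All.sum {l : ℕ} {Q : (Fin l → E) → Prop} {ι : Type*} (s : Finset ι) {c : ι → Ch E l}
    (h : ∀ i ∈ s, All Q (c i)) : All Q (∑ i ∈ s, c i) := by
  classical
  induction s using Finset.induction_on with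
  | empty => simpa using All.zero
  | insert a s ha ih =>
    rw [Finset.sum_insert ha]
    exact (h a (by simp)).add (ih fun i hi => h i (by simp [hi]))

theorem All.lin {l l' : ℕ} {Q : (Fin l → E) → Prop} {Q' : (Fin l' → E') → Prop}
    (f : Ch E l →ₗ[ZMod 2] Ch E' l') (h : ∀ v, Q v → All Q' (f (Finsupp.single v 1)))
    {c : Ch E l} (hc : All Q c) : All Q' (f c) := by
  rw [← Finsupp.sum_single c, Finsupp.sum, map_sum]
  apply All.sum
  intro v hv
  have h1 : c v = 1 := by
    have := Finsupp.mem_support_iff.1 hv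
    revert this
    generalize c v = x
    revert x
    decide
  rw [h1]
  exact h v (hc v hv)

theorem All.cone {l : ℕ} {Q : (Fin l → E) → Prop} {Q' : (Fin (l + 1) → E) → Prop} (e : E)
    (h : ∀ v, Q v → Q' (Fin.cons e v)) {c : Ch E l} (hc : All Q c) : All Q' (cone e l c) := by
  refine All.lin _ (fun v hv => ?_) hc
  rw [cone_single]
  exact All.single (h v hv)

theorem All.lc_congr {M : Type*} [AddCommGroup M] [Module (ZMod 2) M] {l : ℕ}
    {f g : (Fin l → E) → M} {c : Ch E l}
    (h : All (fun v => f v = g v) c) :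
    Finsupp.linearCombination (ZMod 2) f c = Finsupp.linearCombination (ZMod 2) g c := by
  rw [Finsupp.linearCombination_apply, Finsupp.linearCombination_apply]
  exact Finsupp.sum_congr (fun v hv => by rw [h v hv])

end tuples
end CT
end part1

section part2
namespace CT

/-! ### affine simplices -/
abbrev Dl (n : ℕ) := ↥(stdSimplex ℝ (Fin n))

section comb
variable {V : Type*} [NormedAddCommGroup V] [NormedSpace ℝ V] {K : Set V}
variable {V' : Type*} [NormedAddCommGroup V'] [NormedSpace ℝ V'] {K' : Set V'}

noncomputable def comb (hK : Convex ℝ K) {l : ℕ} (v : Fin l → K) : C(Dl l, K) where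
  toFun t := ⟨∑ i, t.1 i • (v i : V), hK.sum_mem (fun i _ => t.2.1 i) t.2.2 (fun i _ => (v i).2)⟩
  continuous_toFun := by
    apply Continuous.subtype_mk
    apply continuous_finsetSum
    intro i _
    exact ((continuous_apply i).comp continuous_subtype_val).smul continuous_const

theorem comb_val (hK : Convex ℝ K) {l : ℕ} (v : Fin l → K) (t : Dl l) :
    (comb hK v t : V) = ∑ i, t.1 i • (v i : V) := rfl

def Aff (hK : Convex ℝ K) (hK' : Convex ℝ K') (f : C(K, K')) : Prop :=
  ∀ (l : ℕ) (w : Fin l → K) (t : Dl l), f (comb hK w t) = comb hK' (f ∘ w) t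

theorem hDl (n : ℕ) : Convex ℝ (stdSimplex ℝ (Fin n)) := convex_stdSimplex ℝ _

noncomputable def vt (n : ℕ) (i : Fin n) : Dl n :=
  ⟨Pi.single i 1, single_mem_stdSimplex ℝ i⟩

theorem comb_vt (hK : Convex ℝ K) {l : ℕ} (v : Fin l → K) (i : Fin l) :
    comb hK v (vt l i) = v i := by
  apply Subtype.ext
  rw [comb_val]
  simp [vt, Pi.single_apply]

theorem comb_vt_comp (hK : Convex ℝ K) {l p : ℕ} (v : Fin l → K) (θ : Fin p → Fin l) :
    comb hK v ∘ (vt l ∘ θ) = v ∘ θ := by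
  funext i
  exact comb_vt hK v _

theorem comb_id (l : ℕ) : comb (hDl l) (vt l) = ContinuousMap.id _ := by
  ext1 t
  apply Subtype.ext
  rw [comb_val]
  funext j
  simp [vt, Pi.single_apply]

theorem comb_aff (hK : Convex ℝ K) {q : ℕ} (v : Fin q → K) : Aff (hDl q) hK (comb hK v) := by
  intro l w t
  apply Subtype.ext
  rw [comb_val, comb_val]
  simp only [comb_val, Function.comp_apply, Finset.smul_sum, Finset.sum_apply, Pi.smul_apply,
    Finset.sum_smul, smul_eq_mul, mul_smul]
  rw [Finset.sum_comm]

theorem comb_comp (hK : Convex ℝ K) (hK' : Convex ℝ K') {f : C(K, K')} (hf : Aff hK hK' f)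
    {l : ℕ} (w : Fin l → K) : f.comp (comb hK w) = comb hK' (f ∘ w) := by
  ext1 t
  exact hf l w t

noncomputable def sm {p q : ℕ} (θ : Fin p → Fin q) : C(Dl p, Dl q) := comb (hDl q) (vt q ∘ θ)

theorem comb_sm (hK : Convex ℝ K) {p q : ℕ} (v : Fin q → K) (θ : Fin p → Fin q) :
    (comb hK v).comp (sm θ) = comb hK (v ∘ θ) := by
  rw [sm, comb_comp (hDl q) hK (comb_aff hK v), comb_vt_comp]

theorem sm_sm {p q r : ℕ} (θ : Fin p → Fin q) (η : Fin q → Fin r) :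
    (sm η).comp (sm θ) = sm (η ∘ θ) := by
  conv_lhs => rw [sm]
  rw [comb_sm]
  rfl

theorem sm_id {p : ℕ} : sm (id : Fin p → Fin p) = ContinuousMap.id _ := comb_id p

noncomputable def ctr (l : ℕ) : Dl (l + 1) :=
  ⟨fun _ => ((l : ℝ) + 1)⁻¹, fun _ => by positivity, by
    simp; field_simp⟩

noncomputable def bary (hK : Convex ℝ K) (l : ℕ) (v : Fin (l + 1) → K) : K := comb hK v (ctr l)

theorem bary_nat (hK : Convex ℝ K) (hK' : Convex ℝ K') {f : C(K, K')} (hf : Aff hK hK' f)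
    (l : ℕ) (v : Fin (l + 1) → K) : f (bary hK l v) = bary hK' l (f ∘ v) := hf _ _ _

theorem bary_dist (hK : Convex ℝ K) (l : ℕ) (v : Fin (l + 1) → K) {d r : ℝ} (hd : 0 ≤ d)
    (hr : (l : ℝ) / (l + 1) ≤ r)
    (h : ∀ i j, dist (v i : V) (v j) ≤ d) (i) : dist (v i : V) (bary hK l v) ≤ r * d := by
  have h1 : (v i : V) - bary hK l v = ∑ j, ((l : ℝ) + 1)⁻¹ • ((v i : V) - v j) := by
    rw [bary, comb_val]
    simp only [smul_sub, Finset.sum_sub_distrib]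
    congr 1
    simp only [Finset.sum_const, Finset.card_univ, Fintype.card_fin]
    rw [← Nat.cast_smul_eq_nsmul ℝ, smul_smul]
    push_cast
    rw [mul_inv_cancel₀ (by positivity), one_smul]
  rw [dist_eq_norm, h1]
  calc _ ≤ ∑ j, ‖((l : ℝ) + 1)⁻¹ • ((v i : V) - v j)‖ := norm_sum_le _ _
    _ ≤ ∑ j, (if j = i then 0 else ((l : ℝ) + 1)⁻¹ * d) := by
      apply Finset.sum_le_sum
      intro j _
      split_ifs with hj
      · simp [hj]
      · rw [norm_smul, ← dist_eq_norm, Real.norm_of_nonneg (by positivity)]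
        gcongr
        exact h i j
    _ = (l : ℝ) / (l + 1) * d := by
      rw [Finset.sum_ite]
      simp only [Finset.sum_const, nsmul_eq_mul, mul_zero, zero_add]
      have : (Finset.univ.filter (fun j => ¬ j = i)).card = l := by
        have := Finset.card_erase_of_mem (Finset.mem_univ i)
        rw [Finset.card_univ, Fintype.card_fin] at this
        rw [← Finset.filter_ne' ] at this
        simpa using this
      rw [this]; ring
    _ ≤ r * d := by gcongr

def HQ {p q : ℕ} (v : Fin p → K) (d : ℝ) (w : Fin q → K) : Prop :=
  (∀ C : Set V, Convex ℝ C → (∀ i, (v i : V) ∈ C) → ∀ i, (w i : V) ∈ C) ∧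
    ∀ i j, dist (w i : V) (w j) ≤ d

theorem HQ.mono {p q : ℕ} {v : Fin p → K} {d d' : ℝ} {w : Fin q → K} (h : HQ v d w) (hd : d ≤ d') :
    HQ v d' w := ⟨h.1, fun i j => (h.2 i j).trans hd⟩

theorem HQ.face {p p' q : ℕ} {v : Fin p → K} {θ : Fin p' → Fin p} {d : ℝ} {w : Fin q → K}
    (h : HQ (v ∘ θ) d w) : HQ v d w := ⟨fun C hC hv => h.1 C hC (fun _ => hv _), h.2⟩

theorem HQ.cons {p q : ℕ} (hK : Convex ℝ K) {v : Fin (p + 1) → K} {d : ℝ} {w : Fin q → K}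
    (hd : 0 ≤ d) (h : HQ v d w) (hv : ∀ i, dist (v i : V) (bary hK p v) ≤ d) :
    HQ v d (Fin.cons (bary hK p v) w : Fin (q + 1) → K) := by
  constructor
  · intro C hC hv
    refine Fin.cases ?_ (fun j => ?_)
    · exact hC.sum_mem (fun i _ => (ctr p).2.1 i) (ctr p).2.2 (fun i _ => hv i)
    · simpa using h.1 C hC hv j
  · have hb := h.1 _ (convex_closedBall (bary hK p v : V) d) hv
    refine Fin.cases ?_ (fun j => ?_) <;> refine Fin.cases ?_ (fun j' => ?_)
    · simpa using hd
    · simpa [dist_comm] using hb j'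
    · simpa using hb j
    · simpa using h.2 j j'

theorem all_face {E : Type*} {l : ℕ} (v : Fin (l + 1) → E) :
    All (fun w => ∃ i : Fin (l + 1), w = v ∘ i.succAbove) (bd l (Finsupp.single v 1)) := by
  rw [bd_single]
  exact All.sum _ fun i _ => All.single ⟨i, rfl⟩

theorem All.mono {E : Type*} {l : ℕ} {Q Q' : (Fin l → E) → Prop} {c : Ch E l} (h : All Q c)
    (hQ : ∀ v, Q v → Q' v) : All Q' c := fun v hv => hQ v (h v hv)

theorem frac_le {p N : ℕ} (hp : p ≤ N) : (p : ℝ) / (p + 1) ≤ (N : ℝ) / (N + 1) := by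
  rw [div_le_div_iff₀ (by positivity) (by positivity)]
  have : (p : ℝ) ≤ N := by exact_mod_cast hp
  nlinarith

theorem sd_HQ (hK : Convex ℝ K) (N p : ℕ) (hp : p ≤ N + 1) (v : Fin p → K) {d : ℝ} (hd : 0 ≤ d)
    (h : ∀ i j, dist (v i : V) (v j) ≤ d) :
    All (HQ v ((N : ℝ) / (N + 1) * d)) (sd (bary hK) p (Finsupp.single v 1)) := by
  induction p with
  | zero =>
    exact All.single ⟨fun C _ hv => hv, fun i => i.elim0⟩
  | succ p ih =>
    rw [sd_single]
    have hd' : 0 ≤ (N : ℝ) / (N + 1) * d := by positivity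
    refine All.cone (Q := HQ v ((N : ℝ) / (N + 1) * d)) _ (fun w hw => ?_) ?_
    · exact hw.cons hK hd' (bary_dist hK p v hd (frac_le (by omega)) h)
    · refine All.lin _ ?_ (all_face v)
      rintro _ ⟨i, rfl⟩
      exact (ih (by omega) (v ∘ i.succAbove) (fun _ _ => h _ _)).mono fun w hw => hw.face

theorem tt_HQ (hK : Convex ℝ K) (p : ℕ) (v : Fin p → K) {d : ℝ} (hd : 0 ≤ d)
    (h : ∀ i j, dist (v i : V) (v j) ≤ d) :
    All (HQ v d) (tt (bary hK) p (Finsupp.single v 1)) := by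
  induction p with
  | zero =>
    simp only [tt, hom, LinearMap.zero_apply]
    exact All.zero
  | succ p ih =>
    rw [tt, hom_single, ← tt]
    have hr : (p : ℝ) / (p + 1) ≤ 1 := by
      rw [div_le_one (by positivity)]; linarith
    refine All.cone (Q := HQ v d) _ (fun w hw => ?_) ?_
    · exact hw.cons hK hd (by simpa using bary_dist hK p v hd hr h)
    · refine All.add (All.add ?_ ?_) ?_
      · exact All.single ⟨fun C _ hv => hv, h⟩
      · refine (sd_HQ hK p (p+1) le_rfl v hd h).mono fun w hw => hw.mono ?_
        calc _ ≤ 1 * d := by gcongr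
          _ = d := one_mul d
      · refine All.lin _ ?_ (all_face v)
        rintro _ ⟨i, rfl⟩
        exact (ih (v ∘ i.succAbove) (fun _ _ => h _ _)).mono fun w hw => hw.face

theorem sdm_diam (hK : Convex ℝ K) (N p : ℕ) (hp : p ≤ N + 1) (v : Fin p → K) {d : ℝ} (hd : 0 ≤ d)
    (h : ∀ i j, dist (v i : V) (v j) ≤ d) (m : ℕ) :
    All (fun (w : Fin p → K) => ∀ i j, dist (w i : V) (w j) ≤ ((N : ℝ) / (N + 1)) ^ m * d)
      (sdm (bary hK) m p (Finsupp.single v 1)) := by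
  induction m with
  | zero => simpa [sdm] using All.single h
  | succ m ih =>
    rw [sdm_succ]
    refine All.lin _ (fun w hw => ?_) ih
    refine (sd_HQ hK N p hp w (by positivity) hw).mono fun u hu => ?_
    have := hu.2
    rwa [← mul_assoc, ← pow_succ'] at this

end comb
end CT
end part2

section part3
namespace CT
open Set

abbrev Splx (l : ℕ) (Z : Type*) [TopologicalSpace Z] := C(Dl l, Z)
abbrev Coch (Z : Type*) [TopologicalSpace Z] (l : ℕ) := Splx l Z → ZMod 2

section coch
variable {Z : Type*} [TopologicalSpace Z] {X : Type*} [TopologicalSpace X]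

noncomputable def dl {l : ℕ} (α : Coch Z l) : Coch Z (l + 1) :=
  fun σ => ∑ i : Fin (l + 1), α (σ.comp (sm i.succAbove))

def In (V : Set Z) {l : ℕ} (σ : Splx l Z) : Prop := ∀ t, σ t ∈ V

def Coc (V : Set Z) {l : ℕ} (α : Coch Z l) : Prop := ∀ σ, In V σ → dl α σ = 0

def Cob (V : Set Z) : ∀ {l : ℕ}, Coch Z l → Prop
  | 0, α => ∀ σ, In V σ → α σ = 0
  | _ + 1, α => ∃ β : Coch Z _, ∀ σ, In V σ → α σ = dl β σ

theorem In.comp {V : Set Z} {l p : ℕ} {σ : Splx l Z} (h : In V σ) (f : C(Dl p, Dl l)) :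
    In V (σ.comp f) := fun t => h (f t)

theorem In.mono {V W : Set Z} {l : ℕ} {σ : Splx l Z} (h : In V σ) (hVW : V ⊆ W) : In W σ :=
  fun t => hVW (h t)

theorem dl_add {l : ℕ} (α β : Coch Z l) : dl (α + β) = dl α + dl β := by
  funext σ
  simp [dl, Finset.sum_add_distrib]

theorem dl_congr {V : Set Z} {l : ℕ} {α β : Coch Z l} (h : ∀ σ, In V σ → α σ = β σ)
    (σ : Splx (l + 1) Z) (hσ : In V σ) : dl α σ = dl β σ :=
  Finset.sum_congr rfl fun _ _ => h _ (hσ.comp _)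

/-- evaluation of a cochain on tuple chains -/
noncomputable def ev {V : Type*} [NormedAddCommGroup V] [NormedSpace ℝ V] {K : Set V}
    (hK : Convex ℝ K) {l : ℕ} (σ : C(K, Z)) (α : Coch Z l) : Ch K l →ₗ[ZMod 2] ZMod 2 :=
  Finsupp.linearCombination (ZMod 2) (fun v => α (σ.comp (comb hK v)))

section
variable {V : Type*} [NormedAddCommGroup V] [NormedSpace ℝ V] {K : Set V} (hK : Convex ℝ K)
variable {V' : Type*} [NormedAddCommGroup V'] [NormedSpace ℝ V'] {K' : Set V'} (hK' : Convex ℝ K')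

theorem ev_single {l : ℕ} (σ : C(K, Z)) (α : Coch Z l) (v) :
    ev hK σ α (Finsupp.single v 1) = α (σ.comp (comb hK v)) := by
  simp [ev]

theorem ev_bd {l : ℕ} (σ : C(K, Z)) (α : Coch Z l) (c : Ch K (l + 1)) :
    ev hK σ α (bd l c) = ev hK σ (dl α) c := by
  refine ch_ext (f := ev hK σ α ∘ₗ bd l) (g := ev hK σ (dl α)) ?_ c
  intro v
  simp only [LinearMap.comp_apply, bd_single, map_sum, ev_single, dl, ContinuousMap.comp_assoc,
    comb_sm]

theorem ev_tmap {l : ℕ} (σ : C(K', Z)) (α : Coch Z l) {f : C(K, K')} (hf : Aff hK hK' f)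
    (c : Ch K l) : ev hK' σ α (tmap f l c) = ev hK (σ.comp f) α c := by
  refine ch_ext (f := ev hK' σ α ∘ₗ tmap f l) (g := ev hK (σ.comp f) α) ?_ c
  intro v
  simp only [LinearMap.comp_apply, tmap_single, ev_single, ContinuousMap.comp_assoc,
    comb_comp hK hK' hf]

theorem ev_zero {l : ℕ} (σ : C(K, Z)) (α : Coch Z l) (c : Ch K l)
    (h : All (fun w => α (σ.comp (comb hK w)) = 0) c) : ev hK σ α c = 0 := by
  rw [ev, All.lc_congr (g := fun _ => 0) h]
  simp [Finsupp.linearCombination_apply]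

theorem ev_zero' {W : Set Z} {l : ℕ} (σ : C(K, Z)) (hσ : ∀ t, σ t ∈ W) (α : Coch Z l)
    (hα : ∀ τ, In W τ → α τ = 0) (c : Ch K l) : ev hK σ α c = 0 :=
  ev_zero hK σ α c fun _ _ => hα _ fun _ => hσ _

end

theorem dl_dl {l : ℕ} (α : Coch Z l) (σ : Splx (l + 2) Z) : dl (dl α) σ = 0 := by
  have h := ev_bd (hDl (l+2)) σ (dl α) (Finsupp.single (vt (l+2)) 1)
  rw [ev_single, comb_id, ContinuousMap.comp_id, ← ev_bd, bd_bd, map_zero] at h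
  exact h.symm

theorem Cob.coc {V : Set Z} : ∀ {l : ℕ} {α : Coch Z l}, Cob V α → Coc V α
  | 0, α, h => fun σ hσ => Finset.sum_eq_zero fun i _ => h _ (hσ.comp _)
  | l + 1, α, ⟨β, h⟩ => fun σ hσ => by rw [dl_congr h σ hσ, dl_dl]

theorem Cob.add {V : Set Z} : ∀ {l : ℕ} {α β : Coch Z l}, Cob V α → Cob V β → Cob V (α + β)
  | 0, α, β, h, h' => fun σ hσ => by rw [Pi.add_apply, h σ hσ, h' σ hσ, add_zero]
  | l + 1, α, β, ⟨γ, h⟩, ⟨γ', h'⟩ => ⟨γ + γ', fun σ hσ => by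
      rw [dl_add, Pi.add_apply, h σ hσ, h' σ hσ, Pi.add_apply]⟩

theorem Cob.congr {V : Set Z} {l : ℕ} {α β : Coch Z l} (h : Cob V α)
    (e : ∀ σ, In V σ → β σ = α σ) : Cob V β := by
  cases l with
  | zero => exact fun σ hσ => (e σ hσ).trans (h σ hσ)
  | succ l =>
    obtain ⟨γ, h⟩ := h
    exact ⟨γ, fun σ hσ => (e σ hσ).trans (h σ hσ)⟩

theorem Cob.mono {V W : Set Z} {l : ℕ} {α : Coch Z l} (h : Cob W α) (hVW : V ⊆ W) : Cob V α := by
  cases l with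
  | zero => exact fun σ hσ => h σ (hσ.mono hVW)
  | succ l =>
    obtain ⟨γ, h⟩ := h
    exact ⟨γ, fun σ hσ => h σ (hσ.mono hVW)⟩

theorem Cob.dl (V : Set Z) {l : ℕ} (α : Coch Z l) : Cob V (dl α) := ⟨α, fun _ _ => rfl⟩

theorem Coc.mono {V W : Set Z} {l : ℕ} {α : Coch Z l} (h : Coc W α) (hVW : V ⊆ W) : Coc V α :=
  fun σ hσ => h σ (hσ.mono hVW)

theorem Coc.add {V : Set Z} {l : ℕ} {α β : Coch Z l} (h : Coc V α) (h' : Coc V β) :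
    Coc V (α + β) := fun σ hσ => by rw [dl_add, Pi.add_apply, h σ hσ, h' σ hσ, add_zero]

theorem Coc.congr {V : Set Z} {l : ℕ} {α β : Coch Z l} (h : Coc V α)
    (e : ∀ σ, In V σ → β σ = α σ) : Coc V β := fun σ hσ => by rw [dl_congr e σ hσ, h σ hσ]

theorem Cob.of_add {V : Set Z} {l : ℕ} {α β : Coch Z l} (h : Cob V (α + β)) (h' : Cob V β) :
    Cob V α := (h.add h').congr fun σ _ => by
  simp only [Pi.add_apply, add_assoc, z2, add_zero]

theorem eq_of_add {a b : ZMod 2} (h : a + b = 0) : a = b := by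
  revert a b; decide

/-- all reduced cohomology in length `l` vanishes -/
def Van (l : ℕ) (V : Set Z) : Prop := ∀ α : Coch Z l, Coc V α → Cob V α

/-! ### small simplices -/
theorem exists_small {A B : Set Z} (hA : IsOpen A) (hB : IsOpen B) {l : ℕ} (σ : Splx l Z)
    (hσ : In (A ∪ B) σ) : ∃ ε > 0, ∀ (p : ℕ) (w : Fin p → Dl l),
      (∀ i j, dist (w i : Fin l → ℝ) (w j) < ε) →
        In A (σ.comp (comb (hDl l) w)) ∨ In B (σ.comp (comb (hDl l) w)) := by
  obtain ⟨ε, hε, h⟩ := lebesgue_number_lemma_of_metric (s := (univ : Set (Dl l)))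
    (c := fun b : Bool => if b then σ ⁻¹' A else σ ⁻¹' B) isCompact_univ (by
      intro b; cases b
      · exact hB.preimage σ.continuous
      · exact hA.preimage σ.continuous) (by
      intro t _
      rcases hσ t with h | h
      · exact mem_iUnion.2 ⟨true, h⟩
      · exact mem_iUnion.2 ⟨false, h⟩)
  refine ⟨ε, hε, fun p w hw => ?_⟩
  cases p with
  | zero =>
    left
    intro t
    have := t.2.2
    simp at this
  | succ p =>
    obtain ⟨b, hb⟩ := h (w 0) trivial
    have key : ∀ t, comb (hDl l) w t ∈ Metric.ball (w 0) ε := by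
      intro t
      exact (convex_ball ((w 0 : Dl l) : Fin l → ℝ) ε).sum_mem (fun i _ => t.2.1 i) t.2.2
        (fun i _ => Metric.mem_ball.2 (hw i 0))
    cases b
    · right
      exact fun t => hb (key t)
    · left
      exact fun t => hb (key t)

theorem dist_simplex {l : ℕ} (x y : Dl l) : dist (x : Fin l → ℝ) y ≤ 1 :=
  (Metric.dist_le_diam_of_mem (bounded_stdSimplex _) x.2 y.2).trans (diam_stdSimplex_le)

noncomputable abbrev bb (l : ℕ) := bary (hDl l)
noncomputable abbrev top (l : ℕ) : Ch (Dl l) l := Finsupp.single (vt l) 1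

theorem eventually_small {A B : Set Z} (hA : IsOpen A) (hB : IsOpen B) {l : ℕ} (σ : Splx l Z)
    (hσ : In (A ∪ B) σ) : ∃ m, ∀ i ≥ m,
      All (fun w => In A (σ.comp (comb (hDl l) w)) ∨ In B (σ.comp (comb (hDl l) w)))
        (sdm (bb l) i l (top l)) ∧
      All (fun w => In A (σ.comp (comb (hDl l) w)) ∨ In B (σ.comp (comb (hDl l) w)))
        (tt (bb l) l (sdm (bb l) i l (top l))) := by
  obtain ⟨ε, hε, h⟩ := exists_small hA hB σ hσ
  have hr : (l : ℝ) / (l + 1) < 1 := by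
    rw [div_lt_one (by positivity)]; linarith
  obtain ⟨m, hm⟩ := exists_pow_lt_of_lt_one hε hr
  refine ⟨m, fun i hi => ?_⟩
  have h1 : ((l : ℝ) / (l + 1)) ^ i * 1 < ε := by
    rw [mul_one]
    exact (pow_le_pow_of_le_one (by positivity) hr.le hi).trans_lt hm
  have h2 := sdm_diam (hDl l) l l (by omega) (vt l) zero_le_one (fun i j => dist_simplex _ _) i
  refine ⟨h2.mono fun w hw => h _ w fun i j => (hw i j).trans_lt h1, ?_⟩
  refine All.lin _ (fun w hw => ?_) h2
  refine (tt_HQ (hDl l) l w (by positivity) hw).mono fun u hu => h _ u fun i j =>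
    (hu.2 i j).trans_lt h1

theorem sst {A B : Set Z} (hA : IsOpen A) (hB : IsOpen B) {l : ℕ} (α : Coch Z (l + 1))
    (hα : Coc (A ∪ B) α) (h0 : ∀ σ, In A σ ∨ In B σ → α σ = 0) :
    ∃ β : Coch Z l, (∀ σ, In A σ ∨ In B σ → β σ = 0) ∧ ∀ σ, In (A ∪ B) σ → α σ = dl β σ := by
  classical
  choose m hm using fun (l : ℕ) (σ : Splx l Z) (hσ : In (A ∪ B) σ) => eventually_small hA hB σ hσ
  have stab : ∀ (σ : Splx l Z) (hσ : In (A ∪ B) σ) M, m l σ hσ ≤ M →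
      ev (hDl l) σ α (dm (bb l) M l (top l)) = ev (hDl l) σ α (dm (bb l) (m l σ hσ) l (top l)) := by
    intro σ hσ M hM
    induction M, hM using Nat.le_induction with
    | base => rfl
    | succ M hM ih =>
      rw [← ih]
      simp only [dm]
      rw [Finset.sum_range_succ, map_add,
        ev_zero (hDl l) σ α (tt (bb l) l _) (((hm l σ hσ M hM).2).mono fun w hw => h0 _ hw),
        add_zero]
  refine ⟨fun σ => if hσ : In (A ∪ B) σ then ev (hDl l) σ α (dm (bb l) (m l σ hσ) l (top l)) else 0,
    ?_, ?_⟩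
  · intro σ hσ
    have hs : ∀ {p} (w : Fin p → Dl l), In A (σ.comp (comb (hDl l) w)) ∨
        In B (σ.comp (comb (hDl l) w)) := fun w => hσ.imp (fun h => h.comp _) (fun h => h.comp _)
    beta_reduce
    split_ifs with h
    · exact ev_zero _ _ _ _ fun w _ => h0 _ (hs w)
    · rfl
  · intro τ hτ
    have hface : ∀ i : Fin (l + 1), In (A ∪ B) (τ.comp (sm i.succAbove)) := fun i => hτ.comp _
    obtain ⟨M, hM1, hM2⟩ : ∃ M, m _ τ hτ ≤ M ∧ ∀ i : Fin (l + 1), m l _ (hface i) ≤ M := by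
      refine ⟨m _ τ hτ + ∑ i, m l _ (hface i), by omega, fun i => ?_⟩
      have := Finset.single_le_sum (f := fun i => m l _ (hface i)) (fun _ _ => Nat.zero_le _)
        (Finset.mem_univ i)
      omega
    have h1 : ∀ i : Fin (l + 1), ev (hDl l) (τ.comp (sm i.succAbove)) α
        (dm (bb l) (m l _ (hface i)) l (top l)) = ev (hDl (l+1)) τ α
          (dm (bb (l+1)) M l (Finsupp.single (vt (l+1) ∘ i.succAbove) 1)) := by
      intro i
      rw [← stab _ (hface i) M (hM2 i)]
      have ha : Aff (hDl l) (hDl (l+1)) (sm i.succAbove) := comb_aff _ _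
      rw [← ev_tmap (hDl l) (hDl (l+1)) τ α ha, tmap_dm _ (bb l) (bb (l+1))
        (fun p v => bary_nat _ _ ha p v), tmap_single]
      have e : ⇑(sm i.succAbove) ∘ vt l = vt (l + 1) ∘ i.succAbove :=
        comb_vt_comp (hDl (l+1)) (vt (l+1) ∘ i.succAbove) id
      rw [e]
    have h2 : dl (fun σ => if hσ : In (A ∪ B) σ then
        ev (hDl l) σ α (dm (bb l) (m l σ hσ) l (top l)) else 0) τ =
        ev (hDl (l+1)) τ α (dm (bb (l+1)) M l (bd l (top (l+1)))) := by
      rw [bd_single, dl]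
      simp only [dm, map_sum] at h1 ⊢
      rw [Finset.sum_comm]
      refine Finset.sum_congr rfl fun i _ => ?_
      rw [dif_pos (hface i), h1]
    rw [h2]
    have h3 := congrArg (ev (hDl (l+1)) τ α) (bd_dm (bb (l+1)) M l (top (l+1)))
    rw [map_add, map_add, ev_bd, ev_zero' (hDl (l+1)) τ hτ (dl α) hα, zero_add,
      ev_zero (hDl (l+1)) τ α (sdm _ _ _ _) ((hm _ τ hτ M hM1).1.mono fun w hw => h0 _ hw),
      add_zero, ev_single, comb_id, ContinuousMap.comp_id] at h3
    exact h3.symm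

end coch
end CT
end part3

section part4
namespace CT
open Set

section pbk
variable {Z : Type*} [TopologicalSpace Z] {X : Type*} [TopologicalSpace X]
variable {Y : Type*} [TopologicalSpace Y]

def pb (f : C(X, Z)) {l : ℕ} (α : Coch Z l) : Coch X l := fun σ => α (f.comp σ)

theorem dl_pb (f : C(X, Z)) {l : ℕ} (α : Coch Z l) : dl (pb f α) = pb f (dl α) := rfl

theorem pb_add (f : C(X, Z)) {l : ℕ} (α β : Coch Z l) : pb f (α + β) = pb f α + pb f β := rfl

theorem pb_pb (f : C(X, Z)) (g : C(Y, X)) {l : ℕ} (α : Coch Z l) :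
    pb g (pb f α) = pb (f.comp g) α := rfl

theorem pb_id {l : ℕ} (α : Coch Z l) : pb (ContinuousMap.id Z) α = α := rfl

theorem Coc.pb {V : Set X} {W : Set Z} {f : C(X, Z)} (hf : ∀ x ∈ V, f x ∈ W) {l : ℕ}
    {α : Coch Z l} (h : Coc W α) : Coc V (pb f α) := fun σ hσ => h (f.comp σ) fun t => hf _ (hσ t)

theorem Cob.pb {V : Set X} {W : Set Z} {f : C(X, Z)} (hf : ∀ x ∈ V, f x ∈ W) {l : ℕ}
    {α : Coch Z l} (h : Cob W α) : Cob V (pb f α) := by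
  cases l with
  | zero => exact fun σ hσ => h (f.comp σ) fun t => hf _ (hσ t)
  | succ l =>
    obtain ⟨β, h⟩ := h
    exact ⟨CT.pb f β, fun σ hσ => h (f.comp σ) fun t => hf _ (hσ t)⟩

/-! ### prisms -/
abbrev Pr (q : ℕ) : Set ((Fin q → ℝ) × ℝ) := stdSimplex ℝ (Fin q) ×ˢ Icc (0 : ℝ) 1

theorem hPr (q : ℕ) : Convex ℝ (Pr q) := (hDl q).prod (convex_Icc 0 1)

def ins (q : ℕ) (s : unitInterval) : C(Dl q, Pr q) where
  toFun t := ⟨(t.1, s.1), t.2, s.2⟩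
  continuous_toFun := by fun_prop

theorem ins_aff (q : ℕ) (s : unitInterval) : Aff (hDl q) (hPr q) (ins q s) := by
  intro l w t
  apply Subtype.ext
  rw [comb_val]
  have h2 := t.2.2
  apply Prod.ext
  · simp only [Prod.fst_sum]
    rfl
  · simp only [Prod.snd_sum]
    change s.1 = ∑ i, t.1 i • s.1
    rw [← Finset.sum_smul, h2, one_smul]

def prm {p q : ℕ} (h : C(Dl p, Dl q)) : C(Pr p, Pr q) where
  toFun t := ⟨((h ⟨t.1.1, t.2.1⟩).1, t.1.2), (h ⟨t.1.1, t.2.1⟩).2, t.2.2⟩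
  continuous_toFun := by
    apply Continuous.subtype_mk
    apply Continuous.prodMk
    · exact continuous_subtype_val.comp (h.continuous.comp
        ((continuous_fst.comp continuous_subtype_val).subtype_mk _))
    · fun_prop

theorem prm_aff {p q : ℕ} (h : C(Dl p, Dl q)) (hh : Aff (hDl p) (hDl q) h) :
    Aff (hPr p) (hPr q) (prm h) := by
  intro l w t
  apply Subtype.ext
  rw [comb_val]
  apply Prod.ext
  · simp only [Prod.fst_sum]
    have := congrArg Subtype.val (hh l (fun i => ⟨(w i).1.1, (w i).2.1⟩) t)
    rw [comb_val] at this
    rw [show (∑ i, (t.1 i • ((prm h ∘ w) i).1).1) =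
      ∑ i, t.1 i • ((h ∘ fun i => (⟨(w i).1.1, (w i).2.1⟩ : Dl p)) i).1 from rfl, ← this]
    change (h _).1 = (h _).1
    congr 2
    apply Subtype.ext
    exact Prod.fst_sum (s := Finset.univ) (f := fun i => t.1 i • (w i).1)
  · change (comb (hPr p) w t).1.2 = _
    rw [comb_val]
    simp only [Prod.snd_sum]
    rfl

def prs {f g : C(X, Z)} (F : f.Homotopy g) {q : ℕ} (σ : Splx q X) : C(Pr q, Z) where
  toFun t := F (⟨t.1.2, t.2.2⟩, σ ⟨t.1.1, t.2.1⟩)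
  continuous_toFun := by
    refine F.continuous.comp (Continuous.prodMk ?_ ?_)
    · exact (continuous_snd.comp continuous_subtype_val).subtype_mk _
    · exact σ.continuous.comp ((continuous_fst.comp continuous_subtype_val).subtype_mk _)

noncomputable def pho (q l : ℕ) : Ch (Dl q) l →ₗ[ZMod 2] Ch (Pr q) (l + 1) :=
  hom (fun _ v => ins q 0 (v 0)) (fun l => tmap (ins q 0) l) (fun l => tmap (ins q 1) l) l

theorem bd_pho (q l : ℕ) (c : Ch (Dl q) (l + 1)) :
    bd (l + 1) (pho q (l + 1) c) + pho q l (bd l c) =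
      tmap (ins q 0) _ c + tmap (ins q 1) _ c :=
  bd_hom _ _ _ (fun c => ch_ext (fun v => by
    simp only [tmap_single]; congr 1; exact Subsingleton.elim _ _) c)
    (fun l c => (tmap_bd _ _ _).symm) (fun l c => (tmap_bd _ _ _).symm) l c

theorem tmap_pho {p q : ℕ} (h : C(Dl p, Dl q)) (l : ℕ) (c : Ch (Dl p) l) :
    tmap (prm h) (l + 1) (pho p l c) = pho q l (tmap h l c) := by
  refine tmap_hom h (prm h) _ _ _ _ _ _ (fun l v => rfl) (fun l c => ?_) (fun l c => ?_) l c
  · exact ch_ext (f := tmap (prm h) l ∘ₗ tmap (ins p 0) l) (g := tmap (ins q 0) l ∘ₗ tmap h l)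
      (fun v => by simp only [LinearMap.comp_apply, tmap_single]; rfl) c
  · exact ch_ext (f := tmap (prm h) l ∘ₗ tmap (ins p 1) l) (g := tmap (ins q 1) l ∘ₗ tmap h l)
      (fun v => by simp only [LinearMap.comp_apply, tmap_single]; rfl) c

theorem sm_vt {l p : ℕ} (θ : Fin p → Fin l) : ⇑(sm θ) ∘ vt p = vt l ∘ θ :=
  comb_vt_comp (hDl l) (vt l ∘ θ) id

theorem splx0 (σ τ : Splx 0 Z) : σ = τ := by
  ext1 t
  have := t.2.2
  simp at this

theorem homotopy_cob {V : Set X} {W : Set Z} {f g : C(X, Z)} (F : f.Homotopy g)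
    (hF : ∀ x ∈ V, ∀ t, F (t, x) ∈ W) {l : ℕ} {α : Coch Z l} (hα : Coc W α) :
    Cob V (pb f α + pb g α) := by
  cases l with
  | zero =>
    intro σ _
    change α (f.comp σ) + α (g.comp σ) = 0
    rw [splx0 (f.comp σ) (g.comp σ), z2]
  | succ l =>
    refine ⟨fun σ => ev (hPr l) (prs F σ) α (pho l l (top l)), fun τ hτ => ?_⟩
    have h1 : dl (fun σ => ev (hPr l) (prs F σ) α (pho l l (top l))) τ =
        ev (hPr (l+1)) (prs F τ) α (pho (l+1) l (bd l (top (l+1)))) := by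
      rw [bd_single, dl, map_sum, map_sum]
      refine Finset.sum_congr rfl fun i _ => ?_
      have ha : Aff (hDl l) (hDl (l+1)) (sm i.succAbove) := comb_aff _ _
      rw [← sm_vt, ← tmap_single, ← tmap_pho, ev_tmap (hPr l) (hPr (l+1)) _ _ (prm_aff _ ha)]
      rfl
    rw [h1]
    have h2 := congrArg (ev (hPr (l+1)) (prs F τ) α) (bd_pho (l+1) l (top (l+1)))
    rw [map_add, map_add, ev_bd, ev_zero' (hPr (l+1)) (prs F τ) (fun t => hF _ (hτ _) _) (dl α) hα,
      zero_add, ev_tmap (hDl _) (hPr _) _ _ (ins_aff _ _), ev_tmap (hDl _) (hPr _) _ _ (ins_aff _ _),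
      ev_single, ev_single, comb_id, ContinuousMap.comp_id, ContinuousMap.comp_id] at h2
    rw [h2]
    change α _ + α _ = α _ + α _
    congr 2
    · ext1 t
      exact (F.map_zero_left _).symm
    · ext1 t
      exact (F.map_one_left _).symm

/-! ### subtypes -/
def incl (V : Set Z) : C(V, Z) := ⟨Subtype.val, continuous_subtype_val⟩

def lft {V : Set Z} {l : ℕ} (σ : Splx l Z) (h : In V σ) : Splx l V :=
  ⟨fun t => ⟨σ t, h t⟩, σ.continuous.subtype_mk _⟩

open Classical in
noncomputable def exte {V : Set Z} {l : ℕ} (α : Coch V l) : Coch Z l :=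
  fun σ => if h : In V σ then α (lft σ h) else 0

theorem pb_exte {V : Set Z} {l : ℕ} (α : Coch V l) : pb (incl V) (exte α) = α := by
  funext σ
  have h : In V ((incl V).comp σ) := fun t => (σ t).2
  exact dif_pos h

theorem coc_iff {V : Set Z} {l : ℕ} {α : Coch Z l} : Coc V α ↔ Coc univ (pb (incl V) α) :=
  ⟨fun h => h.pb fun x _ => x.2, fun h σ hσ => h (lft σ hσ) fun _ => trivial⟩

theorem cob_iff {V : Set Z} {l : ℕ} {α : Coch Z l} : Cob V α ↔ Cob univ (pb (incl V) α) := by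
  refine ⟨fun h => h.pb fun x _ => x.2, fun h => ?_⟩
  cases l with
  | zero => exact fun σ hσ => h (lft σ hσ) fun _ => trivial
  | succ l =>
    obtain ⟨β, h⟩ := h
    rw [← pb_exte β] at h
    exact ⟨exte β, fun σ hσ => h (lft σ hσ) fun _ => trivial⟩

theorem van_iff {V : Set Z} {l : ℕ} : Van l V ↔ Van l (univ : Set V) := by
  refine ⟨fun h α hα => ?_, fun h α hα => cob_iff.2 (h _ (coc_iff.1 hα))⟩
  rw [← pb_exte α] at hα ⊢
  exact cob_iff.1 (h _ (coc_iff.2 hα))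

theorem cob_const [Nonempty X] {l : ℕ} (κ : ZMod 2) (h : Coc univ (fun _ => κ : Coch X l)) :
    Cob univ (fun _ => κ : Coch X l) := by
  obtain ⟨x⟩ := ‹Nonempty X›
  have h1 := h (ContinuousMap.const _ x) fun _ => trivial
  simp only [dl, Finset.sum_const, Finset.card_univ, Fintype.card_fin, nsmul_eq_mul] at h1
  cases l with
  | zero =>
    intro σ _
    simpa using h1
  | succ l =>
    by_cases hl : Even l
    · obtain ⟨k, rfl⟩ := hl
      refine ⟨fun _ => κ, fun σ _ => ?_⟩
      simp only [dl, Finset.sum_const, Finset.card_univ, Fintype.card_fin, nsmul_eq_mul]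
      push_cast
      rw [z2]; simp
    · rw [Nat.not_even_iff_odd] at hl
      obtain ⟨k, rfl⟩ := hl
      have : κ = 0 := by
        rw [← h1]
        push_cast
        have h2 : (2 : ZMod 2) = 0 := by decide
        have h3 : (1 : ZMod 2) + 1 = 0 := by decide
        rw [h2, zero_mul, zero_add, h3, zero_add, one_mul]
      subst this
      exact ⟨0, fun σ _ => by simp [dl]⟩

theorem van_contractible (V : Set Z) [hV : ContractibleSpace V] (l : ℕ) : Van l V := by
  rw [van_iff]
  intro α hα
  obtain ⟨c, ⟨F⟩⟩ := id_nullhomotopic V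
  have h1 := homotopy_cob (V := univ) (W := univ) F (fun _ _ _ => trivial) hα
  rw [pb_id] at h1
  have h2 : pb (ContinuousMap.const V c) α = fun _ => α (ContinuousMap.const _ c) := rfl
  refine h1.of_add ?_
  have h3 : Coc univ (pb (ContinuousMap.const V c) α) := hα.pb (V := univ) (W := univ) (f := ContinuousMap.const V c) fun _ _ => trivial
  rw [h2] at h3 ⊢
  have : Nonempty V := ⟨c⟩
  exact cob_const _ h3

/-! ### gluing -/
theorem ext_small {A B : Set Z} (hA : IsOpen A) (hB : IsOpen B) {l : ℕ} (α : Coch Z l)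
    (h : ∀ σ, In A σ ∨ In B σ → dl α σ = 0) :
    ∃ α' : Coch Z l, Coc (A ∪ B) α' ∧ ∀ σ, In A σ ∨ In B σ → α' σ = α σ := by
  obtain ⟨β, h1, h2⟩ := sst hA hB (dl α) (fun σ _ => dl_dl α σ) h
  refine ⟨α + β, fun σ hσ => ?_, fun σ hσ => ?_⟩
  · rw [dl_add, Pi.add_apply, ← h2 σ hσ, z2]
  · rw [Pi.add_apply, h1 σ hσ, add_zero]

open Classical in
theorem glue {A B : Set Z} (hA : IsOpen A) (hB : IsOpen B) {l : ℕ} {α : Coch Z (l + 1)}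
    (hα : Coc (A ∪ B) α) {βA βB : Coch Z l} (h1 : ∀ σ, In A σ → α σ = dl βA σ)
    (h2 : ∀ σ, In B σ → α σ = dl βB σ) (h : Cob (A ∩ B) (βA + βB)) : Cob (A ∪ B) α := by
  obtain ⟨γ, hγ, hγ'⟩ : ∃ γ : Coch Z l, dl γ = 0 ∧ ∀ σ, In A σ → In B σ → βA σ = (βB + γ) σ := by
    cases l with
    | zero =>
      refine ⟨0, by funext σ; simp [dl], fun σ h1 h2 => ?_⟩
      rw [add_zero]
      exact eq_of_add (h σ fun t => ⟨h1 t, h2 t⟩)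
    | succ l =>
      obtain ⟨γ, h⟩ := h
      refine ⟨dl γ, by funext σ; exact dl_dl γ σ, fun σ h1 h2 => ?_⟩
      rw [Pi.add_apply, ← h σ fun t => ⟨h1 t, h2 t⟩, Pi.add_apply, add_comm (βA σ), ← add_assoc,
        z2, zero_add]
  let β : Coch Z l := fun σ => if In A σ then βA σ else (βB + γ) σ
  have hsm : ∀ σ, In A σ ∨ In B σ → (α + dl β) σ = 0 := by
    rintro σ (hσ | hσ)
    · rw [Pi.add_apply, h1 σ hσ, dl_congr (V := A) (α := β) (β := βA) (fun τ hτ => if_pos hτ) σ hσ,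
        z2]
    · rw [Pi.add_apply, h2 σ hσ, dl_congr (V := B) (α := β) (β := βB + γ) (fun τ hτ => ?_) σ hσ,
        dl_add, hγ, add_zero, z2]
      by_cases hA : In A τ
      · exact (if_pos hA).trans (hγ' τ hA hτ)
      · exact if_neg hA
  obtain ⟨η, -, hη⟩ := sst hA hB (α + dl β) (hα.add fun σ _ => dl_dl β σ) hsm
  exact Cob.of_add (β := dl β) ⟨η, hη⟩ (Cob.dl _ β)

theorem mv {A B : Set Z} (hA : IsOpen A) (hB : IsOpen B) {l : ℕ} (vA : Van (l + 1) A)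
    (vB : Van (l + 1) B) (vAB : Van l (A ∩ B)) : Van (l + 1) (A ∪ B) := by
  intro α hα
  obtain ⟨βA, h1⟩ := vA α (hα.mono subset_union_left)
  obtain ⟨βB, h2⟩ := vB α (hα.mono subset_union_right)
  refine glue hA hB hα h1 h2 (vAB _ fun σ hσ => ?_)
  rw [dl_add, Pi.add_apply, ← h1 σ (hσ.mono inter_subset_left),
    ← h2 σ (hσ.mono inter_subset_right), z2]

/-! ### cup products -/
def frn {p r : ℕ} (h : p ≤ r) (i : Fin (p + 1)) : Fin (r + 1) := ⟨i, by omega⟩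
def bkn {p q r : ℕ} (h : p + q = r) (i : Fin (q + 1)) : Fin (r + 1) := ⟨p + i, by omega⟩

noncomputable def cup {p q r : ℕ} (h : p + q = r) (α : Coch Z (p + 1)) (β : Coch Z (q + 1)) :
    Coch Z (r + 1) :=
  fun σ => α (σ.comp (sm (frn (by omega : p ≤ r)))) * β (σ.comp (sm (bkn h)))

def fcN {l : ℕ} (k : ℕ) (j : Fin l) : Fin (l + 1) := ⟨if (j : ℕ) < k then j else j + 1, by
  split_ifs <;> omega⟩

theorem fcN_val {l : ℕ} (k : ℕ) (j : Fin l) : (fcN k j : ℕ) = if (j : ℕ) < k then (j : ℕ) else j + 1 :=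
  rfl
theorem frn_val {p r : ℕ} (h : p ≤ r) (i : Fin (p + 1)) : (frn h i : ℕ) = i := rfl
theorem bkn_val {p q r : ℕ} (h : p + q = r) (i : Fin (q + 1)) : (bkn h i : ℕ) = p + i := rfl

theorem dl_range {l : ℕ} (α : Coch Z l) (σ : Splx (l + 1) Z) :
    dl α σ = ∑ k ∈ Finset.range (l + 1), α (σ.comp (sm (fcN k))) := by
  rw [← Fin.sum_univ_eq_sum_range (fun k => α (σ.comp (sm (fcN k)))), dl]
  refine Finset.sum_congr rfl fun i _ => ?_
  congr 3
  funext j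
  apply Fin.ext
  simp only [fcN, Fin.succAbove, Fin.lt_def]
  split_ifs <;> simp_all

theorem leibniz {p q r : ℕ} (h : p + q = r) (h1 : p + 1 + q = r + 1) (h2 : p + (q + 1) = r + 1)
    (α : Coch Z (p + 1)) (β : Coch Z (q + 1)) :
    dl (cup h α β) = cup h1 (dl α) β + cup h2 α (dl β) := by
  funext σ
  rw [Pi.add_apply, cup, cup, dl_range, dl_range, dl_range, Finset.sum_range_succ _ (p + 1),
    Finset.sum_range_succ' _ (q + 1), add_mul, mul_add, Finset.sum_mul, Finset.mul_sum]
  have e : r + 1 + 1 = (p + 1) + (q + 1) := by omega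
  have e2 : ∀ f : ℕ → ZMod 2, ∑ k ∈ Finset.range (r + 1 + 1), f k = ∑ k ∈ Finset.range (p + 1), f k
      + ∑ k ∈ Finset.range (q + 1), f (p + 1 + k) := fun f => by rw [e, Finset.sum_range_add]
  rw [e2]
  have c1 : α ((σ.comp (sm (frn (by omega : p + 1 ≤ r + 1)))).comp (sm (fcN (p + 1)))) =
      α (σ.comp (sm (frn (by omega : p ≤ r + 1)))) := by
    rw [ContinuousMap.comp_assoc, sm_sm]
    congr 3
    funext j
    apply Fin.ext
    simp only [frn, fcN, Function.comp_apply]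
    rw [if_pos j.2]
  have c2 : β ((σ.comp (sm (bkn h2))).comp (sm (fcN 0))) = β (σ.comp (sm (bkn h1))) := by
    rw [ContinuousMap.comp_assoc, sm_sm]
    congr 3
    funext j
    apply Fin.ext
    simp only [bkn, fcN, Function.comp_apply, Nat.not_lt_zero, if_false]
    omega
  rw [c1, c2]
  have s1 : ∀ k ∈ Finset.range (p + 1), cup h α β (σ.comp (sm (fcN k))) =
      α ((σ.comp (sm (frn (by omega : p + 1 ≤ r + 1)))).comp (sm (fcN k))) *
        β (σ.comp (sm (bkn h1))) := by
    intro k hk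
    rw [Finset.mem_range] at hk
    rw [cup]
    simp only [ContinuousMap.comp_assoc, sm_sm]
    have e1 : (fcN k : Fin (r + 1) → _) ∘ bkn h = bkn h1 := by
      funext j
      apply Fin.ext
      rw [Function.comp_apply, fcN_val, bkn_val, bkn_val, if_neg (by omega)]
      omega
    rw [e1]
    rfl
  have s2 : ∀ k ∈ Finset.range (q + 1), cup h α β (σ.comp (sm (fcN (p + 1 + k)))) =
      α (σ.comp (sm (frn (by omega : p ≤ r + 1)))) *
        β ((σ.comp (sm (bkn h2))).comp (sm (fcN (k + 1)))) := by
    intro k hk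
    rw [cup]
    simp only [ContinuousMap.comp_assoc, sm_sm]
    have e1 : (fcN (p + 1 + k) : Fin (r + 1) → _) ∘ frn (by omega : p ≤ r) =
        frn (by omega : p ≤ r + 1) := by
      funext j
      apply Fin.ext
      rw [Function.comp_apply, fcN_val, frn_val, frn_val, if_pos (by omega)]
    have e2 : (fcN (p + 1 + k) : Fin (r + 1) → _) ∘ bkn h = bkn h2 ∘ fcN (k + 1) := by
      funext j
      apply Fin.ext
      rw [Function.comp_apply, fcN_val, bkn_val, Function.comp_apply, bkn_val, fcN_val]
      split_ifs <;> omega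
    rw [e1, e2]
  rw [Finset.sum_congr rfl s1, Finset.sum_congr rfl s2]
  have key : ∀ x y z : ZMod 2, y + z = (y + x) + (z + x) := by decide
  exact key _ _ _

theorem cup_add_left {p q r : ℕ} (h : p + q = r) (α α' : Coch Z (p + 1)) (β : Coch Z (q + 1)) :
    cup h (α + α') β = cup h α β + cup h α' β := by
  funext σ; simp [cup, add_mul]

theorem cup_add_right {p q r : ℕ} (h : p + q = r) (α : Coch Z (p + 1)) (β β' : Coch Z (q + 1)) :
    cup h α (β + β') = cup h α β + cup h α β' := by
  funext σ; simp [cup, mul_add]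

theorem pb_cup {p q r : ℕ} (h : p + q = r) (f : C(X, Z)) (α : Coch Z (p + 1))
    (β : Coch Z (q + 1)) : pb f (cup h α β) = cup h (pb f α) (pb f β) := rfl

theorem cup_assoc {p q s pq qs r : ℕ} (h1 : p + q = pq) (h2 : pq + s = r) (h3 : q + s = qs)
    (h4 : p + qs = r) (α : Coch Z (p + 1)) (β : Coch Z (q + 1)) (γ : Coch Z (s + 1)) :
    cup h2 (cup h1 α β) γ = cup h4 α (cup h3 β γ) := by
  funext σ
  simp only [cup, ContinuousMap.comp_assoc, sm_sm, mul_assoc]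
  have e1 : frn (by omega : pq ≤ r) ∘ bkn h1 = bkn h4 ∘ frn (by omega : q ≤ qs) := by
    funext j
    apply Fin.ext
    simp only [bkn, frn, Function.comp_apply]
  have e2 : bkn h2 = bkn h4 ∘ bkn h3 := by
    funext j
    apply Fin.ext
    simp only [bkn, Function.comp_apply]
    omega
  rw [e1, e2]
  rfl

theorem cup_congr {V : Set Z} {p q r : ℕ} (h : p + q = r) {α α' : Coch Z (p + 1)}
    {β β' : Coch Z (q + 1)} (hα : ∀ σ, In V σ → α σ = α' σ) (hβ : ∀ σ, In V σ → β σ = β' σ)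
    (σ) (hσ : In V σ) : cup h α β σ = cup h α' β' σ := by
  rw [cup, cup, hα _ (hσ.comp _), hβ _ (hσ.comp _)]

theorem cup_zero_left {V : Set Z} {p q r : ℕ} (h : p + q = r) {α : Coch Z (p + 1)}
    (β : Coch Z (q + 1)) (hα : ∀ σ, In V σ → α σ = 0) (σ) (hσ : In V σ) : cup h α β σ = 0 := by
  rw [cup, hα _ (hσ.comp _), zero_mul]

theorem cup_zero_right {V : Set Z} {p q r : ℕ} (h : p + q = r) (α : Coch Z (p + 1))
    {β : Coch Z (q + 1)} (hβ : ∀ σ, In V σ → β σ = 0) (σ) (hσ : In V σ) : cup h α β σ = 0 := by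
  rw [cup, hβ _ (hσ.comp _), mul_zero]

theorem Coc.cup {V : Set Z} {p q r : ℕ} (h : p + q = r) {α : Coch Z (p + 1)} {β : Coch Z (q + 1)}
    (hα : Coc V α) (hβ : Coc V β) : Coc V (cup h α β) := by
  intro σ hσ
  rw [leibniz h (by omega) (by omega), Pi.add_apply, cup_zero_left _ _ hα σ hσ,
    cup_zero_right _ _ hβ σ hσ, add_zero]

theorem Cob.cup_left {V : Set Z} {p q r : ℕ} (h : p + 1 + q = r) {α : Coch Z (p + 2)}
    {β : Coch Z (q + 1)} (hα : Cob V α) (hβ : Coc V β) : Cob V (CT.cup h α β) := by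
  obtain ⟨η, hη⟩ := hα
  obtain rfl : r = p + q + 1 := by omega
  refine ⟨CT.cup rfl η β, fun σ hσ => ?_⟩
  rw [leibniz rfl h (by omega), Pi.add_apply, cup_zero_right _ _ hβ σ hσ, add_zero]
  exact cup_congr h hη (fun _ _ => rfl) σ hσ

theorem Cob.cup_right {V : Set Z} {p q r : ℕ} (h : p + (q + 1) = r) {α : Coch Z (p + 1)}
    {β : Coch Z (q + 2)} (hα : Coc V α) (hβ : Cob V β) : Cob V (CT.cup h α β) := by
  obtain ⟨η, hη⟩ := hβ
  obtain rfl : r = p + q + 1 := by omega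
  refine ⟨CT.cup rfl α η, fun σ hσ => ?_⟩
  rw [leibniz rfl (by omega) h, Pi.add_apply, cup_zero_left _ _ hα σ hσ, zero_add]
  exact cup_congr h (fun _ _ => rfl) hη σ hσ

theorem rel_cup {A B : Set Z} (hA : IsOpen A) (hB : IsOpen B) {p q r : ℕ}
    (h : p + 1 + (q + 1) = r) {x : Coch Z (p + 2)} {c : Coch Z (q + 2)}
    (hx : Coc (A ∪ B) x) (hc : Coc (A ∪ B) c) (hxA : Cob A x) (hcB : Cob B c) :
    Cob (A ∪ B) (cup h x c) := by
  obtain ⟨η, hη⟩ := hxA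
  obtain ⟨ζ, hζ⟩ := hcB
  have hx' : Coc (A ∪ B) (x + dl η) := hx.add (Cob.dl _ η).coc
  have hc' : Coc (A ∪ B) (c + dl ζ) := hc.add (Cob.dl _ ζ).coc
  have h0 : Cob (A ∪ B) (cup h (x + dl η) (c + dl ζ)) := by
    obtain ⟨β, -, hβ⟩ := sst hA hB _ (hx'.cup h hc') (by
      rintro σ (hσ | hσ)
      · exact cup_zero_left h _ (fun τ hτ => by rw [Pi.add_apply, hη τ hτ, z2]) σ hσ
      · exact cup_zero_right h _ (fun τ hτ => by rw [Pi.add_apply, hζ τ hτ, z2]) σ hσ)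
    exact ⟨β, hβ⟩
  rw [cup_add_right] at h0
  have h1 := h0.of_add (Cob.cup_right h hx' (Cob.dl _ ζ))
  rw [cup_add_left] at h1
  exact h1.of_add (Cob.cup_left h (Cob.dl _ η) hc)

end pbk
end CT
end part4

section part5
namespace CT
open Set

section count
variable {Z : Type*} [TopologicalSpace Z] {ι : Type*}

def un (s : Finset ι) (U : ι → Set Z) : Set Z := {z | ∃ i ∈ s, z ∈ U i}
def itr (s : Finset ι) (U : ι → Set Z) : Set Z := {z | ∀ i ∈ s, z ∈ U i}

structure Good (s : Finset ι) (U : ι → Set Z) : Prop where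
  op : ∀ i ∈ s, IsOpen (U i)
  ac : ∀ T ⊆ s, T.Nonempty → (itr T U).Nonempty → ∀ l, Van l (itr T U)

theorem Good.mono {s t : Finset ι} {U : ι → Set Z} (h : Good s U) (hts : t ⊆ s) : Good t U :=
  ⟨fun i hi => h.op i (hts hi), fun T hT => h.ac T (hT.trans hts)⟩

theorem Good.isOpen_un {s : Finset ι} {U : ι → Set Z} (h : Good s U) : IsOpen (un s U) := by
  have : un s U = ⋃ i ∈ s, U i := by ext; simp [un]
  rw [this]
  exact isOpen_biUnion h.op

variable [DecidableEq ι]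

theorem un_union (s t : Finset ι) (U : ι → Set Z) : un (s ∪ t) U = un s U ∪ un t U := by
  ext z; simp only [un, Finset.mem_union, mem_setOf_eq, mem_union]
  constructor
  · rintro ⟨i, h | h, hz⟩
    · exact Or.inl ⟨i, h, hz⟩
    · exact Or.inr ⟨i, h, hz⟩
  · rintro (⟨i, h, hz⟩ | ⟨i, h, hz⟩)
    · exact ⟨i, Or.inl h, hz⟩
    · exact ⟨i, Or.inr h, hz⟩

theorem un_insert (m : ι) (s : Finset ι) (U : ι → Set Z) : un (insert m s) U = un s U ∪ U m := by
  ext z; simp [un, or_comm]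

theorem un_link (m : ι) (s : Finset ι) (U : ι → Set Z) :
    un s (fun i => U i ∩ U m) = un s U ∩ U m := by
  ext z; simp only [un, mem_inter_iff, mem_setOf_eq]
  constructor
  · rintro ⟨i, hi, h1, h2⟩; exact ⟨⟨i, hi, h1⟩, h2⟩
  · rintro ⟨⟨i, hi, h1⟩, h2⟩; exact ⟨i, hi, h1, h2⟩

theorem itr_link (m : ι) {s : Finset ι} (hs : s.Nonempty) (U : ι → Set Z) :
    itr s (fun i => U i ∩ U m) = itr (insert m s) U := by
  obtain ⟨j, hj⟩ := hs
  ext z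
  simp only [itr, mem_inter_iff, mem_setOf_eq, Finset.mem_insert, forall_eq_or_imp]
  exact ⟨fun h => ⟨(h j hj).2, fun i hi => (h i hi).1⟩, fun h i hi => ⟨h.2 i hi, h.1⟩⟩

theorem itr_singleton (m : ι) (U : ι → Set Z) : itr {m} U = U m := by
  ext z; simp [itr]

theorem Good.link {m : ι} {s : Finset ι} {U : ι → Set Z} (h : Good (insert m s) U) :
    Good s (fun i => U i ∩ U m) := by
  refine ⟨fun i hi => (h.op i (by simp [hi])).inter (h.op m (by simp)), fun T hT hne => ?_⟩
  rw [itr_link m hne]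
  exact h.ac _ (Finset.insert_subset_insert m hT) (by simp)

theorem Good.ac1 {m : ι} {s : Finset ι} {U : ι → Set Z} (h : Good s U) (hm : m ∈ s)
    (hne : (U m).Nonempty) (l : ℕ) : Van l (U m) := by
  have := h.ac {m} (by simpa using hm) (by simp) (by rwa [itr_singleton]) l
  rwa [itr_singleton] at this

theorem van_empty (l : ℕ) : Van (l + 1) (∅ : Set Z) := by
  intro α _
  exact ⟨0, fun σ hσ => (hσ (vt _ 0)).elim⟩

theorem van_zero {V : Set Z} (h : V.Nonempty) : Van 0 V := by
  intro α hα σ hσ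
  obtain ⟨z, hz⟩ := h
  have := hα (ContinuousMap.const _ z) (fun _ => hz)
  rw [dl, Fin.sum_univ_one] at this
  rw [← this]
  exact congrArg α (splx0 _ _)

theorem claimA (s : Finset ι) : ∀ (U : ι → Set Z) (_ : Good s U) (d : ℕ)
    (_ : ∀ T ⊆ s, (itr T U).Nonempty → T.card ≤ d) (l : ℕ), d ≤ l → Van (l + 1) (un s U) := by
  induction s using Finset.induction_on with
  | empty =>
    intro U _ d _ l _
    have : un (∅ : Finset ι) U = ∅ := by ext; simp [un]
    rw [this]
    exact van_empty l
  | insert m s hm ih =>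
    intro U hU d hd l hl
    cases d with
    | zero =>
      have : un (insert m s) U = ∅ := by
        ext z
        simp only [un, mem_setOf_eq, mem_empty_iff_false, iff_false]
        rintro ⟨i, hi, hz⟩
        have := hd {i} (by simpa using hi) ⟨z, by rwa [itr_singleton]⟩
        simp at this
      rw [this]
      exact van_empty l
    | succ d =>
      obtain ⟨l, rfl⟩ : ∃ l', l = l' + 1 := ⟨l - 1, by omega⟩
      rw [un_insert]
      have hs : s ⊆ insert m s := Finset.subset_insert m s
      refine mv (hU.mono hs).isOpen_un (hU.op m (by simp)) ?_ ?_ ?_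
      · exact ih U (hU.mono hs) _ (fun T hT => hd T (hT.trans hs)) _ hl
      · rcases (U m).eq_empty_or_nonempty with h | h
        · rw [h]; exact van_empty _
        · exact hU.ac1 (by simp) h _
      · rw [← un_link]
        refine ih _ hU.link d (fun T hT hne => ?_) l (by omega)
        rcases T.eq_empty_or_nonempty with rfl | hTne
        · simp
        · rw [itr_link m hTne] at hne
          have := hd _ (Finset.insert_subset_insert m hT) hne
          rw [Finset.card_insert_of_notMem fun h => hm (hT h)] at this
          omega

theorem claimA' {s : Finset ι} {U : ι → Set Z} (hU : Good s U) {l : ℕ}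
    (h : ¬ Van (l + 1) (un s U)) : ∃ T ⊆ s, (itr T U).Nonempty ∧ l + 1 ≤ T.card := by
  by_contra! hc
  exact h (claimA s U hU l (fun T hT hne => by have := hc T hT hne; omega) l le_rfl)

theorem claimB (s : Finset ι) : ∀ (U : ι → Set Z) (_ : Good s U) (_ : s.Nonempty)
    (_ : (itr s U).Nonempty) (l : ℕ), Van l (un s U) := by
  induction s using Finset.induction_on with
  | empty => intro U _ h; simp at h
  | insert m s hm ih =>
    intro U hU _ hne l
    have hs : s ⊆ insert m s := Finset.subset_insert m s
    have hmne : (U m).Nonempty := by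
      obtain ⟨z, hz⟩ := hne
      exact ⟨z, hz m (by simp)⟩
    rcases s.eq_empty_or_nonempty with rfl | hsne
    · have : un (insert m ∅) U = U m := by ext; simp [un]
      rw [this]
      exact hU.ac1 (by simp) hmne _
    · rw [un_insert]
      cases l with
      | zero => exact van_zero (hmne.mono subset_union_right)
      | succ l =>
        refine mv (hU.mono hs).isOpen_un (hU.op m (by simp)) ?_ (hU.ac1 (by simp) hmne _) ?_
        · refine ih U (hU.mono hs) hsne ?_ _
          obtain ⟨z, hz⟩ := hne
          exact ⟨z, fun i hi => hz i (hs hi)⟩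
        · rw [← un_link]
          exact ih _ hU.link hsne (by rwa [itr_link m hsne]) l

theorem claimD (l1 : ℕ) : ∀ (s : Finset ι) (U : ι → Set Z) (l2 : ℕ), Good s U → l2 < l1 →
    s.card ≤ l1 + 1 → ¬ Van l1 (un s U) → ¬ Van l2 (un s U) → False := by
  induction l1 with
  | zero => intro s U l2 _ h; omega
  | succ l1 ih =>
    intro s U l2 hU hl hs h1 h2
    obtain ⟨T, hT, hne, hc⟩ := claimA' hU h1
    have hTne : T.Nonempty := by rw [← Finset.card_pos]; omega
    by_cases hTs : T = s
    · subst hTs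
      exact h1 (claimB T U hU hTne hne _)
    · obtain ⟨i0, hi0, hiT⟩ := Finset.exists_of_ssubset (hT.ssubset_of_ne hTs)
      have hsT : s = insert i0 T := by
        symm
        apply Finset.eq_of_subset_of_card_le (Finset.insert_subset hi0 hT)
        rw [Finset.card_insert_of_notMem hiT]
        omega
      subst hsT
      have hcard := Finset.card_insert_of_notMem hiT
      have hW := claimB T U (hU.mono hT) hTne hne
      rw [un_insert] at h1 h2
      have hine : (U i0).Nonempty := by
        by_contra hemp
        rw [not_nonempty_iff_eq_empty] at hemp
        rw [hemp, union_empty] at h1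
        exact h1 (hW _)
      have hmv : ∀ l, Van l (un T U ∩ U i0) → Van (l+1) (un T U ∪ U i0) := fun l hl =>
        mv (hU.mono hT).isOpen_un (hU.op _ hi0) (hW _) (hU.ac1 hi0 hine _) hl
      cases l2 with
      | zero => exact h2 (van_zero (hine.mono subset_union_right))
      | succ l2 =>
        refine ih T (fun i => U i ∩ U i0) l2 hU.link (by omega) (by omega) ?_ ?_
        · rw [un_link]; exact fun h => h1 (hmv _ h)
        · rw [un_link]; exact fun h => h2 (hmv _ h)

end count

section prods
variable {Z : Type*} [TopologicalSpace Z] {X : Type*} [TopologicalSpace X]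

/-- `y` is a product of positive degree cocycles -/
inductive IsProd (V : Set Z) : List ℕ → ∀ r : ℕ, Coch Z (r + 1) → Prop
  | one (d : ℕ) (x : Coch Z (d + 2)) (hx : Coc V x) : IsProd V [d + 1] (d + 1) x
  | cons (d : ℕ) (x : Coch Z (d + 2)) (ds : List ℕ) (r : ℕ) (y : Coch Z (r + 1)) (r' : ℕ)
      (h : d + 1 + r = r') (hx : Coc V x) (hy : IsProd V ds r y) :
      IsProd V ((d + 1) :: ds) r' (cup h x y)

theorem IsProd.mono {V W : Set Z} (hVW : V ⊆ W) {ds : List ℕ} {r : ℕ} {y : Coch Z (r + 1)}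
    (h : IsProd W ds r y) : IsProd V ds r y := by
  induction h with
  | one d x hx => exact .one d x (hx.mono hVW)
  | cons d x ds r y r' h hx hy ih => exact .cons d x ds r y r' h (hx.mono hVW) ih

theorem IsProd.pb {V : Set X} {W : Set Z} {f : C(X, Z)} (hf : ∀ x ∈ V, f x ∈ W)
    {ds : List ℕ} {r : ℕ} {y : Coch Z (r + 1)} (h : IsProd W ds r y) :
    IsProd V ds r (pb f y) := by
  induction h with
  | one d x hx => exact .one d _ (hx.pb hf)
  | cons d x ds r y r' h hx hy ih => exact .cons d _ ds r _ r' h (hx.pb hf) ih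

theorem IsProd.coc {V : Set Z} {ds : List ℕ} {r : ℕ} {y : Coch Z (r + 1)}
    (h : IsProd V ds r y) : Coc V y := by
  induction h with
  | one d x hx => exact hx
  | cons d x ds r y r' h hx hy ih => exact hx.cup h ih

theorem IsProd.sum {V : Set Z} {ds : List ℕ} {r : ℕ} {y : Coch Z (r + 1)}
    (h : IsProd V ds r y) : r = ds.sum := by
  induction h with
  | one d x hx => simp
  | cons d x ds r y r' h hx hy ih => simp; omega

theorem IsProd.append {V : Set Z} {ds : List ℕ} {r : ℕ} {y : Coch Z (r + 1)}
    (h : IsProd V ds r y) {d : ℕ} {x : Coch Z (d + 2)} (hx : Coc V x) :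
    ∀ {r' : ℕ} (e : r + (d + 1) = r'), IsProd V (ds ++ [d + 1]) r' (cup e y x) := by
  induction h with
  | one d' x' hx' =>
    intro r' e
    exact .cons d' x' _ _ x r' e hx' (.one d x hx)
  | cons d' x' ds r y r'' h hx' hy ih =>
    intro r' e
    rw [cup_assoc h e rfl (by omega)]
    exact .cons d' x' _ _ _ r' _ hx' (ih rfl)

def cnt : List ℕ → ℕ
  | [] => 0
  | [b] => b
  | [a, b] => a + 2 * b + 4
  | a :: b :: c :: ds => (a + (b :: c :: ds).sum) + 1 + cnt (b :: c :: ds)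

variable {ι : Type*} [DecidableEq ι]

theorem main_count (ds : List ℕ) : ∀ (s : Finset ι) (U : ι → Set Z) (_ : Good s U) (r : ℕ)
    (y : Coch Z (r + 1)), IsProd (un s U) ds r y → ¬ Cob (un s U) y → 2 ≤ ds.length →
    ds.Pairwise (· < ·) → cnt ds ≤ s.card := by
  induction ds with
  | nil => intro s U _ r y _ _ h; simp at h
  | cons a ds ih =>
    intro s U hU r y hy hn hlen hpw
    cases hy with
    | one d x hx => simp at hlen
    | cons d x ds r z r' h hx hz =>
      have hyc : Coc (un s U) (cup h x z) := hx.cup h hz.coc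
      obtain ⟨T, hT, hne, hc⟩ := claimA' hU (fun hv => hn (hv _ hyc))
      have hTne : T.Nonempty := by rw [← Finset.card_pos]; omega
      have hW := claimB T U (hU.mono hT) hTne hne
      have hs : s = T ∪ (s \ T) := (Finset.union_sdiff_of_subset hT).symm
      have hus : un s U = un T U ∪ un (s \ T) U := by rw [← un_union, ← hs]
      have hcard : s.card = T.card + (s \ T).card := by
        rw [Finset.card_sdiff_of_subset hT]
        have := Finset.card_le_card hT
        omega
      have hR := hU.mono (Finset.sdiff_subset : s \ T ⊆ s)
      have hRs : un (s \ T) U ⊆ un s U := by rw [hus]; exact subset_union_right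
      have hTs : un T U ⊆ un s U := by rw [hus]; exact subset_union_left
      have oT := (hU.mono hT).isOpen_un
      have oR := hR.isOpen_un
      have hsum := hz.sum
      have hrpos : ∃ q, r = q + 1 := by
        cases hz with
        | one d x hx => exact ⟨_, rfl⟩
        | cons d x ds r y r' h hx hy => exact ⟨d + r, by omega⟩
      obtain ⟨q, rfl⟩ := hrpos
      have hzR : ¬ Cob (un (s \ T) U) z := by
        intro hcob
        apply hn
        rw [hus] at hx hz ⊢
        exact rel_cup oT oR h hx hz.coc (hW _ _ (hx.mono subset_union_left)) hcob
      have hpw' := List.pairwise_cons.1 hpw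
      match ds, hz, hsum, hlen, ih, hpw' with
      | [], _, _, hlen, _, _ => simp at hlen
      | [b], hz, hsum, _, _, hpw' =>
        have hxR : ¬ Cob (un (s \ T) U) x := by
          intro hcob
          apply hn
          rw [hus, union_comm] at hx hz ⊢
          exact rel_cup oR oT h hx hz.coc hcob (hW _ _ (hz.coc.mono subset_union_right))
        have hlt : d + 1 < b := hpw'.1 b (by simp)
        simp at hsum
        by_contra hlt2
        refine claimD (q + 2) (s \ T) U (d + 2) hR (by omega) ?_ ?_ ?_
        · simp only [cnt] at hlt2
          omega
        · exact fun hv => hzR (hv _ (hz.coc.mono hRs))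
        · exact fun hv => hxR (hv _ (hx.mono hRs))
      | b :: c :: ds, hz, hsum, _, ih, hpw' =>
        have := ih (s \ T) U hR _ z (hz.mono hRs) hzR (by simp) hpw'.2
        rw [cnt, ← hsum]
        omega

def deg (k j : ℕ) : List ℕ := (List.range' k j).map (fun i => 4 * i + 3)

theorem deg_succ (k j : ℕ) : deg k (j + 1) = (4 * k + 3) :: deg (k + 1) j := by
  simp [deg, List.range'_succ]

theorem deg_append (j : ℕ) : deg 0 (j + 1) = deg 0 j ++ [4 * j + 3] := by
  simp [deg, List.range'_concat]

theorem deg_sum (k j : ℕ) : (deg k j).sum = 4 * k * j + 2 * j ^ 2 + j := by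
  induction j generalizing k with
  | zero => simp [deg]
  | succ j ih => rw [deg_succ, List.sum_cons, ih]; ring

theorem deg_pw (k j : ℕ) : (deg k j).Pairwise (· < ·) := by
  rw [deg, List.pairwise_map]
  exact (List.pairwise_lt_range' (s := k) (n := j)).imp (fun h => by omega)

theorem cnt_deg (k j : ℕ) : 6 * cnt (deg k (j + 2)) + 2 * (j + 2) * (j + 3) * (2 * j + 5) =
    12 * (k + j + 2) * (j + 2) * (j + 3) + 3 * (j + 2) * (j + 3) + 6 * (j + 2) + 12 := by
  induction j generalizing k with
  | zero =>
    have h2 : cnt (deg k (0 + 2)) = 12 * k + 21 := by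
      rw [deg_succ k (0 + 1), deg_succ (k + 1) 0]
      simp only [deg, List.range'_zero, List.map_nil, cnt]
      ring
    rw [h2]
    ring
  | succ j ih =>
    have h1 := ih (k + 1)
    have h2 : cnt (deg k (j + 3)) = 4 * k + 3 + (deg (k + 1) (j + 2)).sum + 1
        + cnt (deg (k + 1) (j + 2)) := by
      rw [deg_succ k, deg_succ, deg_succ, cnt]
    rw [h2, deg_sum]
    nlinarith

theorem cnt_final (n : ℕ) (hn : 2 ≤ n) :
    (8 * n ^ 3 + 9 * n ^ 2 + 7 * n + 12) / 6 = cnt (deg 0 n) := by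
  obtain ⟨j, rfl⟩ := Nat.exists_eq_add_of_le' hn
  have := cnt_deg 0 j
  apply Nat.div_eq_of_eq_mul_right (by norm_num)
  nlinarith

end prods
end CT
end part5

section part6
open Set
namespace CT
section sph
variable {F : Type*} [TopologicalSpace F]

abbrev ZF (F : Type*) := F × (ℕ → ℝ)

def Rr (F : Type*) (m : ℕ) : Set (ZF F) := {z | ∃ i < m, z.2 i ≠ 0}
def Hf (F : Type*) (s : ℝ) (m : ℕ) : Set (ZF F) := {z | (∃ i < m, z.2 i ≠ 0) ∨ 0 < s * z.2 m}

def jx (x : ℕ → ℝ) : C(F, ZF F) := ⟨fun h => (h, x), by fun_prop⟩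
def prF : C(ZF F, F) := ⟨fun z => z.1, by fun_prop⟩
def e0 (s : ℝ) : ℕ → ℝ := fun i => if i = 0 then s else 0
def em (s : ℝ) (m : ℕ) : ℕ → ℝ := fun i => if i = m then s else 0

theorem Rr_open (m : ℕ) : IsOpen (Rr F m) := by
  have : Rr F m = ⋃ i ∈ Finset.range m, {z : ZF F | z.2 i ≠ 0} := by
    ext z; simp [Rr]
  rw [this]
  refine isOpen_biUnion fun i _ => ?_
  exact isOpen_ne_fun (by fun_prop) continuous_const

theorem Hf_open (s : ℝ) (m : ℕ) : IsOpen (Hf F s m) := by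
  have : Hf F s m = Rr F m ∪ {z : ZF F | 0 < s * z.2 m} := rfl
  rw [this]
  exact (Rr_open m).union (isOpen_lt continuous_const (by fun_prop))

theorem Hf_inter (m : ℕ) : Hf F 1 m ∩ Hf F (-1) m = Rr F m := by
  ext z
  constructor
  · rintro ⟨h1 | h1, h2 | h2⟩
    · exact h1
    · exact h1
    · exact h2
    · linarith
  · exact fun h => ⟨Or.inl h, Or.inl h⟩

theorem Hf_union (m : ℕ) : Hf F 1 m ∪ Hf F (-1) m = Rr F (m + 1) := by
  ext z
  constructor
  · rintro ((⟨i, hi, h⟩ | h) | (⟨i, hi, h⟩ | h))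
    · exact ⟨i, by omega, h⟩
    · exact ⟨m, by omega, fun h' => by simp [h'] at h⟩
    · exact ⟨i, by omega, h⟩
    · exact ⟨m, by omega, fun h' => by simp [h'] at h⟩
  · rintro ⟨i, hi, h⟩
    by_cases hm : i < m
    · exact Or.inl (Or.inl ⟨i, hm, h⟩)
    · obtain rfl : i = m := by omega
      rcases lt_or_gt_of_ne h with h | h
      · exact Or.inr (Or.inr (by linarith))
      · exact Or.inl (Or.inr (by linarith))

theorem Rr_sub (s : ℝ) (m : ℕ) : Rr F m ⊆ Hf F s m := fun _ h => Or.inl h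

noncomputable def hfH (s : ℝ) (m : ℕ) :
    (ContinuousMap.id (ZF F)).Homotopy ((jx (em s m)).comp prF) where
  toFun p := (p.2.1, fun i => (1 - (p.1 : ℝ)) * p.2.2 i + p.1 * em s m i)
  continuous_toFun := by
    refine Continuous.prodMk (by fun_prop) ?_
    exact continuous_pi fun i => by fun_prop
  map_zero_left z := by ext <;> simp
  map_one_left z := by ext <;> simp [jx, prF]

theorem hfH_mem {s : ℝ} (hs : s * s = 1) (m : ℕ) (z : ZF F) (hz : z ∈ Hf F s m) (t : unitInterval) :
    hfH s m (t, z) ∈ Hf F s m := by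
  have h0 := t.2.1
  have h1 := t.2.2
  show (∃ i < m, (1 - (t : ℝ)) * z.2 i + t * em s m i ≠ 0) ∨
    0 < s * ((1 - (t : ℝ)) * z.2 m + t * em s m m)
  have e1 : s * ((1 - (t : ℝ)) * z.2 m + t * em s m m) = (1 - (t : ℝ)) * (s * z.2 m) + t := by
    simp only [em, if_true]
    linear_combination (t : ℝ) * hs
  rw [e1]
  rcases eq_or_lt_of_le h1 with h | h
  · right; rw [h]; norm_num
  · rcases hz with ⟨i, hi, hne⟩ | hz
    · left
      refine ⟨i, hi, ?_⟩
      simp only [em, if_neg (by omega : ¬ i = m), mul_zero, add_zero]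
      exact mul_ne_zero (by linarith) hne
    · right
      have := mul_pos (by linarith : 0 < 1 - (t : ℝ)) hz
      linarith

theorem lemP {s : ℝ} (hs : s * s = 1) {m l : ℕ} {α : Coch (ZF F) l} (hα : Coc (Hf F s m) α)
    (x : ℕ → ℝ) (hx : ∀ h : F, (h, x) ∈ Hf F s m) :
    Cob (Hf F s m) (α + pb prF (pb (jx x) α)) := by
  have h1 := homotopy_cob (V := Hf F s m) (hfH s m) (fun z hz t => hfH_mem hs m z hz t) hα
  have h2 := Cob.pb (V := Hf F s m) (f := (jx x).comp prF) (fun z _ => hx z.1) h1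
  refine (h1.add h2).congr fun σ hσ => ?_
  have : pb ((jx x).comp prF) (pb ((jx (em s m)).comp prF) α) = pb ((jx (em s m)).comp prF) α := rfl
  rw [pb_id, pb_add, this]
  simp only [Pi.add_apply]
  have h3 := z2 (pb ((jx (em s m)).comp prF) α σ)
  rw [pb_pb]
  linear_combination -h3

theorem one_one : (1 : ℝ) * 1 = 1 := by norm_num
theorem mone_mone : (-1 : ℝ) * -1 = 1 := by norm_num

theorem e0_mem (s : ℝ) (hs : s ≠ 0) (m : ℕ) (hm : 0 < m) (h : F) : (h, e0 s) ∈ Rr F m :=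
  ⟨0, hm, by simpa [e0] using hs⟩

noncomputable def lft0 (Z : Type*) [TopologicalSpace Z] : Splx 0 Z :=
  ⟨fun t => (by have := t.2.2; simp at this : False).elim, continuous_of_const fun t => (by have := t.2.2; simp at this : False).elim⟩

theorem low (m : ℕ) : ∀ (l : ℕ), l < m → ∀ α : Coch (ZF F) l, Coc (Rr F m) α →
    Cob univ (pb (jx (e0 1)) α : Coch F l) → Cob (Rr F m) α := by
  induction m with
  | zero => intro l hl; omega
  | succ m ih =>
    intro l hl α hα h0
    cases l with
    | zero =>
      intro σ _
      have := h0 (lft0 F) (fun _ => trivial)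
      rw [← this]
      exact congrArg α (splx0 _ _)
    | succ l =>
      have hp : ∀ s, ∀ h : F, (h, e0 1) ∈ Hf F s m := fun s h =>
        Rr_sub s m (e0_mem 1 one_ne_zero m (by omega) h)
      have key : ∀ s : ℝ, s * s = 1 → Hf F s m ⊆ Rr F (m + 1) → Cob (Hf F s m) α := by
        intro s hs hsub
        have h1 := lemP hs (hα.mono hsub) (e0 1) (hp s)
        exact h1.of_add (h0.pb (V := Hf F s m) (f := prF) fun _ _ => mem_univ _)
      rw [← Hf_union] at hα ⊢
      obtain ⟨βA, hA⟩ := key 1 one_one (by rw [← Hf_union]; exact subset_union_left)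
      obtain ⟨βB, hB⟩ := key (-1) mone_mone (by rw [← Hf_union]; exact subset_union_right)
      have hc : Coc (Rr F m) (βA + βB) := by
        intro σ hσ
        rw [dl_add, Pi.add_apply, ← hA σ (hσ.mono (Rr_sub _ _)), ← hB σ (hσ.mono (Rr_sub _ _)), z2]
      have hγ : Coc univ (pb (jx (e0 1)) (βA + βB) : Coch F l) :=
        hc.pb fun h _ => e0_mem 1 one_ne_zero m (by omega) h
      have hγ' : Coc univ (pb prF (pb (jx (e0 1)) (βA + βB) : Coch F l)) :=
        hγ.pb (V := univ) (f := prF) fun _ _ => mem_univ _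
      refine glue (Hf_open 1 m) (Hf_open (-1) m) hα
        (βA := βA + pb prF (pb (jx (e0 1)) (βA + βB))) (βB := βB) (fun σ hσ => ?_) hB ?_
      · rw [dl_add, Pi.add_apply, hγ' σ (fun _ => trivial), add_zero, hA σ hσ]
      · rw [Hf_inter]
        refine ih l (by omega) _ ?_ ?_
        · refine (hc.add (hγ'.mono (subset_univ _))).congr fun σ _ => ?_
          simp only [Pi.add_apply]; ring
        · have : ∀ σ, (pb (jx (e0 1)) (βA + pb prF (pb (jx (e0 1)) (βA + βB)) + βB) : Coch F l) σ
              = 0 := by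
            intro σ
            have := z2 (pb (jx (e0 1)) (βA + βB) σ)
            have e : (pb (jx (e0 1)) (pb prF (pb (jx (e0 1)) (βA + βB))) : Coch F l)
              = pb (jx (e0 1)) (βA + βB) := rfl
            rw [← this, pb_add, pb_add, e, pb_add]
            simp only [Pi.add_apply]
            ring
          cases l with
          | zero => exact fun σ _ => this σ
          | succ l => exact ⟨0, fun σ _ => by rw [this]; simp [dl]⟩

theorem high {L : ℕ} (hL : 2 ≤ L) (hF : ∀ l ≥ L, Van l (univ : Set F)) (m : ℕ) :
    ∀ l, L + m ≤ l + 1 → Van l (Rr F m) := by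
  induction m with
  | zero =>
    intro l hl
    have : Rr F 0 = ∅ := by ext; simp [Rr]
    rw [this]
    obtain ⟨l, rfl⟩ : ∃ k, l = k + 1 := ⟨l - 1, by omega⟩
    exact van_empty l
  | succ m ih =>
    intro l hl
    obtain ⟨l, rfl⟩ : ∃ k, l = k + 1 := ⟨l - 1, by omega⟩
    have key : ∀ s : ℝ, s * s = 1 → Van (l + 1) (Hf F s m) := by
      intro s hs α hα
      have hx : ∀ h : F, (h, em s m) ∈ Hf F s m := fun h => Or.inr (by simp [em, hs])
      exact (lemP hs hα (em s m) hx).of_add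
        ((hF (l + 1) (by omega) _ (hα.pb (V := univ) fun h _ => hx h)).pb (V := Hf F s m) (f := prF) fun _ _ => mem_univ _)
    rw [← Hf_union]
    refine mv (Hf_open _ _) (Hf_open _ _) (key 1 one_one) (key _ mone_mone) ?_
    rw [Hf_inter]
    exact ih l (by omega)

def UCob {r : ℕ} (y : Coch F (r + 1)) : Prop := Cob univ y ∧ (r = 0 → ∀ σ, y σ = 0)

open Classical in
theorem mid [Nonempty F] (q : ℕ) : ∃ v : Coch (ZF F) (q + 1), Coc (Rr F (q + 1)) v ∧
    (∀ σ, (pb (jx (e0 (-1))) v : Coch F (q + 1)) σ = 0) ∧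
    ∀ (r r' : ℕ) (h : r + q = r') (y : Coch (ZF F) (r + 1)), Coc (Rr F (q + 1)) y →
      ¬ UCob (pb (jx (e0 1)) y : Coch F (r + 1)) → ¬ Cob (Rr F (q + 1)) (cup h y v) := by
  induction q with
  | zero =>
    refine ⟨fun σ => if 0 < (σ (vt 1 0)).2 0 then 1 else 0, ?_, ?_, ?_⟩
    · intro σ hσ
      have key : ∀ a b, (if 0 < (σ a).2 0 then (1 : ZMod 2) else 0) =
          if 0 < (σ b).2 0 then 1 else 0 := by
        haveI : PreconnectedSpace (Dl 2) :=
          Subtype.preconnectedSpace (hDl 2).isPreconnected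
        have h1 : ∀ a b, 0 < (σ a).2 0 → 0 < (σ b).2 0 := by
          intro a b ha
          by_contra hb
          have hc : Continuous fun t => (σ t).2 0 :=
            (continuous_apply 0).comp (continuous_snd.comp σ.continuous)
          obtain ⟨t, ht⟩ := mem_range_of_exists_le_of_exists_ge hc ⟨b, not_lt.1 hb⟩ ⟨a, ha.le⟩
          obtain ⟨i, hi, hne⟩ := hσ t
          obtain rfl : i = 0 := by omega
          exact hne ht
        intro a b
        by_cases h : 0 < (σ a).2 0
        · rw [if_pos h, if_pos (h1 a b h)]
        · rw [if_neg h, if_neg fun h' => h (h1 b a h')]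
      rw [dl, Fin.sum_univ_two]
      exact (congrArg (_ + ·) (key _ _)).trans (z2 _)
    · intro σ
      have : ¬ (0 : ℝ) < e0 (-1) 0 := by simp [e0]
      exact if_neg this
    · rintro r r' h y hy hn hc
      obtain rfl : r = r' := by omega
      apply hn
      obtain ⟨η, hη⟩ := hc
      have hp : ∀ σ : Splx (r + 1) F, (pb (jx (e0 1)) y : Coch F (r + 1)) σ =
          dl (pb (jx (e0 1)) η) σ := by
        intro σ
        have := hη ((jx (e0 1)).comp σ) fun t => e0_mem 1 one_ne_zero _ (by omega) _
        rw [dl_pb]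
        show _ = dl η _
        rw [← this, cup, if_pos, mul_one]
        · have : frn (le_refl r) = id := rfl
          rw [this, sm_id]
          rfl
        · show (0 : ℝ) < e0 1 0
          simp [e0]
      have hnn : ∀ σ : Splx (r + 1) F, dl (pb (jx (e0 (-1))) η) σ = 0 := by
        intro σ
        have := hη ((jx (e0 (-1))).comp σ) fun t => e0_mem (-1) (by norm_num) _ (by omega) _
        rw [dl_pb]
        show dl η _ = _
        rw [← this, cup, if_neg, mul_zero]
        · show ¬ (0 : ℝ) < e0 (-1) 0
          simp [e0]
      refine ⟨⟨_, fun σ _ => hp σ⟩, ?_⟩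
      rintro rfl σ
      rw [hp σ, ← hnn σ, dl, dl, Fin.sum_univ_one, Fin.sum_univ_one]
      exact congrArg η (splx0 _ _)
  | succ q ih =>
    obtain ⟨v, hv, hvn, hv'⟩ := ih
    have hAB : Rr F (q + 1) = Hf F 1 (q + 1) ∩ Hf F (-1) (q + 1) := (Hf_inter _).symm
    obtain ⟨c, hc, hce⟩ := ext_small (Hf_open 1 (q + 1)) (Hf_open (-1) (q + 1))
      (fun σ : Splx (q + 1 + 1) (ZF F) => if In (Hf F 1 (q + 1)) σ then dl v σ else 0) (by
        rintro σ (hσ | hσ)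
        · rw [dl_congr (V := Hf F 1 (q + 1)) (β := dl v) (fun τ hτ => if_pos hτ) σ hσ, dl_dl]
        · refine Finset.sum_eq_zero fun i _ => ?_
          show (if In (Hf F 1 (q + 1)) (σ.comp (sm i.succAbove)) then _ else _) = _
          split_ifs with h
          · exact hv _ (by rw [hAB]; exact fun t => ⟨h t, hσ _⟩)
          · rfl)
    rw [Hf_union] at hc
    refine ⟨c, hc, fun σ => ?_, ?_⟩
    · have h1 : In (Rr F (q + 1)) ((jx (e0 (-1))).comp σ) :=
        fun t => e0_mem (-1) (by norm_num) _ (by omega) _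
      show c ((jx (e0 (-1))).comp σ) = 0
      rw [hce _ (Or.inl (h1.mono (Rr_sub _ _))), if_pos (h1.mono (Rr_sub _ _))]
      exact hv _ h1
    · rintro r r' h y hy hn hcob
      obtain rfl : r' = r + q + 1 := by omega
      refine hv' r (r + q) rfl y (hy.mono ?_) hn ?_
      · rw [← Hf_union (q + 1)]; exact (Rr_sub 1 _).trans subset_union_left
      obtain ⟨η, hη⟩ := hcob
      have hyA : Coc (Hf F 1 (q + 1)) y := hy.mono (by rw [← Hf_union]; exact subset_union_left)
      have hA : Coc (Hf F 1 (q + 1)) (η + cup rfl y v) := by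
        intro σ hσ
        rw [dl_add, Pi.add_apply, ← hη σ (hσ.mono (by rw [← Hf_union]; exact subset_union_left)),
          leibniz rfl (by omega) h, Pi.add_apply, cup_zero_left _ _ hyA σ hσ, zero_add,
          cup_congr h (fun _ _ => rfl) (fun τ hτ => (hce τ (Or.inl hτ)).trans (if_pos hτ)) σ hσ, z2]
      have hB : Coc (Hf F (-1) (q + 1)) η := by
        intro σ hσ
        rw [← hη σ (hσ.mono (by rw [← Hf_union]; exact subset_union_right))]
        refine cup_zero_right (V := Hf F (-1) (q + 1)) _ _ (fun τ hτ => ?_) σ hσ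
        rw [hce τ (Or.inr hτ)]
        split_ifs with h
        · exact hv _ (by rw [hAB]; exact fun t => ⟨h t, hτ _⟩)
        · rfl
      have hm : ∀ s, ∀ h : F, (h, e0 (-1)) ∈ Hf F s (q + 1) := fun s h =>
        Rr_sub s _ (e0_mem (-1) (by norm_num) _ (by omega) h)
      have h1 := (lemP one_one hA (e0 (-1)) (hm 1)).mono (Rr_sub 1 (q + 1))
      have h2 := (lemP mone_mone hB (e0 (-1)) (hm (-1))).mono (Rr_sub (-1) (q + 1))
      refine (h1.add h2).congr fun σ hσ => ?_
      have h3 : pb prF (pb (jx (e0 (-1))) (cup rfl y v)) σ = 0 := by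
        rw [pb_cup, pb_cup, cup]
        exact mul_eq_zero_of_right _ (hvn _)
      rw [pb_add, pb_add]
      simp only [Pi.add_apply, h3, add_zero]
      have h4 := z2 (η σ)
      have h5 := z2 (pb prF (pb (jx (e0 (-1))) η) σ)
      linear_combination - h4 - h5
end sph
end CT
end part6

section part7
open Set
namespace CT
section step
variable {F G X : Type*} [TopologicalSpace F] [TopologicalSpace G] [TopologicalSpace X]

theorem add_pb_id {p : C(X, X)} (h : p.Homotopic (ContinuousMap.id X)) {l : ℕ} {α : Coch X l}
    (hα : Coc univ α) : Cob univ (α + pb p α) := by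
  obtain ⟨H⟩ := h
  refine (homotopy_cob (V := univ) (W := univ) H (fun _ _ _ => mem_univ _) hα).congr fun σ _ => ?_
  rw [pb_id, add_comm]

theorem cob_of_dom {p : C(X, F)} {j : C(F, X)} (h : (j.comp p).Homotopic (ContinuousMap.id X))
    {l : ℕ} {α : Coch X l} (hα : Coc univ α) (h0 : Cob univ (pb j α)) : Cob univ α :=
  (add_pb_id h hα).of_add (h0.pb (V := univ) (f := p) fun _ _ => mem_univ _)

theorem van_of_dom {p : C(X, F)} {j : C(F, X)} (h : (j.comp p).Homotopic (ContinuousMap.id X))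
    {l : ℕ} (hF : Van l (univ : Set F)) : Van l (univ : Set X) := fun α hα =>
  cob_of_dom h hα (hF _ (hα.pb fun _ _ => mem_univ _))

inductive ProdU : List ℕ → ∀ r : ℕ, Coch X (r + 1) → Prop
  | unit : ProdU [] 0 (fun _ => 1)
  | prod (ds : List ℕ) (r : ℕ) (y : Coch X (r + 1)) (h : IsProd univ ds r y) : ProdU ds r y

theorem ProdU.coc {ds : List ℕ} {r : ℕ} {y : Coch X (r + 1)} (h : ProdU ds r y) : Coc univ y := by
  cases h with
  | unit =>
    intro σ _
    rw [dl, Fin.sum_univ_two]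
    exact z2 _
  | prod _ _ _ h => exact h.coc

theorem ProdU.append {ds : List ℕ} {r : ℕ} {y : Coch X (r + 1)}
    (h : ProdU ds r y) {d : ℕ} {x : Coch X (d + 2)} (hx : Coc univ x)
    {r' : ℕ} (e : r + (d + 1) = r') : IsProd univ (ds ++ [d + 1]) r' (cup e y x) := by
  cases h with
  | unit =>
    obtain rfl : r' = d + 1 := by omega
    have : cup e (fun _ => 1) x = x := by
      funext σ
      have h2 : bkn e = id := by
        funext i
        apply Fin.ext
        simp [bkn]
      rw [cup, one_mul, h2, sm_id]
      rfl
    rw [this]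
    exact .one d x hx
  | prod _ _ _ h => exact h.append hx e

theorem IsProd.lift {j : C(F, G)} {ds : List ℕ} {r : ℕ} {y : Coch F (r + 1)}
    (h : IsProd univ ds r y) (hl : ∀ d ∈ ds, ∀ x : Coch F (d + 1), Coc univ x →
      ∃ x' : Coch G (d + 1), Coc univ x' ∧ CT.pb j x' = x) :
    ∃ y' : Coch G (r + 1), IsProd univ ds r y' ∧ CT.pb j y' = y := by
  induction h with
  | one d x hx =>
    obtain ⟨x', h1, h2⟩ := hl _ (by simp) x hx
    exact ⟨x', .one d x' h1, h2⟩
  | cons d x ds r y r' h hx hy ih =>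
    obtain ⟨x', h1, h2⟩ := hl _ (by simp) x hx
    obtain ⟨y', h3, h4⟩ := ih fun d hd => hl d (by simp [hd])
    exact ⟨CT.cup h x' y', .cons d x' ds r y' r' h h1 h3, by rw [pb_cup, h2, h4]⟩

theorem ProdU.lift {j : C(F, G)} {ds : List ℕ} {r : ℕ} {y : Coch F (r + 1)}
    (h : ProdU ds r y) (hl : ∀ d ∈ ds, ∀ x : Coch F (d + 1), Coc univ x →
      ∃ x' : Coch G (d + 1), Coc univ x' ∧ CT.pb j x' = x) :
    ∃ y' : Coch G (r + 1), ProdU ds r y' ∧ CT.pb j y' = y := by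
  cases h with
  | unit => exact ⟨_, .unit, rfl⟩
  | prod _ _ _ h =>
    obtain ⟨y', h1, h2⟩ := h.lift hl
    exact ⟨y', .prod _ _ _ h1, h2⟩

def ipt (m : ℕ) (s : ℝ) (hs : s ≠ 0) : C(F, Rr F (m + 1)) :=
  ⟨fun h => ⟨(h, e0 s), e0_mem s hs _ (by omega) h⟩, by fun_prop⟩

def inlA (A B : Set G) : C(↥(A ∩ B), A) := ⟨fun g => ⟨g.1, g.2.1⟩, by fun_prop⟩
def inlB (A B : Set G) : C(↥(A ∩ B), B) := ⟨fun g => ⟨g.1, g.2.2⟩, by fun_prop⟩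

structure Stp (F G : Type*) [TopologicalSpace F] [TopologicalSpace G] (q : ℕ) where
  A : Set G
  B : Set G
  oA : IsOpen A
  oB : IsOpen B
  cov : A ∪ B = univ
  θ : C(Rr F (q + 1), ↥(A ∩ B))
  θ' : C(↥(A ∩ B), Rr F (q + 1))
  h1 : (θ'.comp θ).Homotopic (ContinuousMap.id _)
  h2 : (θ.comp θ').Homotopic (ContinuousMap.id _)
  pA : C(A, F)
  pB : C(B, F)
  eA : pA.comp ((inlA A B).comp (θ.comp (ipt q 1 one_ne_zero))) = ContinuousMap.id F
  eB : pB.comp ((inlB A B).comp (θ.comp (ipt q 1 one_ne_zero))) = ContinuousMap.id F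
  hA : (((inlA A B).comp (θ.comp (ipt q 1 one_ne_zero))).comp pA).Homotopic (ContinuousMap.id _)
  hB : (((inlB A B).comp (θ.comp (ipt q 1 one_ne_zero))).comp pB).Homotopic (ContinuousMap.id _)

variable {q : ℕ} (S : Stp F G q)

def Stp.j : C(F, G) := (incl (S.A ∩ S.B)).comp (S.θ.comp (ipt q 1 one_ne_zero))

open Classical in
theorem Stp.lift {d : ℕ} (hd : d < q) (x : Coch F (d + 1)) (hx : Coc univ x) :
    ∃ x' : Coch G (d + 1), Coc univ x' ∧ pb S.j x' = x := by
  set xA : Coch G (d + 1) := exte (pb S.pA x) with hxA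
  set xB : Coch G (d + 1) := exte (pb S.pB x) with hxB
  have cA : Coc S.A xA := coc_iff.2 (by rw [hxA, pb_exte]; exact hx.pb fun _ _ => mem_univ _)
  have cB : Coc S.B xB := coc_iff.2 (by rw [hxB, pb_exte]; exact hx.pb fun _ _ => mem_univ _)
  have eA : pb S.j xA = x := by
    have : S.j = (incl S.A).comp ((inlA S.A S.B).comp (S.θ.comp (ipt q 1 one_ne_zero))) := rfl
    rw [this, ← pb_pb, hxA, pb_exte, pb_pb, S.eA, pb_id]
  have eB : pb S.j xB = x := by
    have : S.j = (incl S.B).comp ((inlB S.A S.B).comp (S.θ.comp (ipt q 1 one_ne_zero))) := rfl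
    rw [this, ← pb_pb, hxB, pb_exte, pb_pb, S.eB, pb_id]
  have hc : Coc (S.A ∩ S.B) (xA + xB) :=
    (cA.mono inter_subset_left).add (cB.mono inter_subset_right)
  obtain ⟨β, hβ⟩ : Cob (S.A ∩ S.B) (xA + xB) := by
    rw [cob_iff]
    rw [coc_iff] at hc
    refine cob_of_dom S.h2 hc ?_
    rw [← pb_exte (pb S.θ (pb (incl (S.A ∩ S.B)) (xA + xB))), ← cob_iff]
    refine low (q + 1) (d + 1) (by omega) _ ?_ ?_
    · rw [coc_iff, pb_exte]
      exact hc.pb fun _ _ => mem_univ _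
    · have : (jx (e0 1) : C(F, ZF F)) = (incl (Rr F (q + 1))).comp (ipt q 1 one_ne_zero) := rfl
      rw [this, ← pb_pb, pb_exte]
      refine ⟨0, fun σ _ => ?_⟩
      have h3 : pb (ipt q 1 one_ne_zero) (pb S.θ (pb (incl (S.A ∩ S.B)) (xA + xB))) =
        pb S.j xA + pb S.j xB := rfl
      rw [h3, eA, eB, Pi.add_apply, z2]
      simp [dl]
  obtain ⟨c, hc, hce⟩ := ext_small S.oA S.oB
    (fun σ : Splx (d + 1) G => if In S.B σ then xB σ else (xA + dl β) σ) (by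
      have onB : ∀ σ, In S.B σ → (if In S.B σ then xB σ else (xA + dl β) σ) = xB σ :=
        fun σ h => if_pos h
      have onA : ∀ σ, In S.A σ → (if In S.B σ then xB σ else (xA + dl β) σ) = (xA + dl β) σ := by
        intro σ h
        split_ifs with h'
        · have := hβ σ fun t => ⟨h t, h' t⟩
          rw [Pi.add_apply, ← this, Pi.add_apply, ← add_assoc, z2, zero_add]
        · rfl
      rintro σ (hσ | hσ)
      · rw [dl_congr onA σ hσ, dl_add, Pi.add_apply, cA σ hσ, dl_dl, add_zero]
      · rw [dl_congr onB σ hσ, cB σ hσ])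
  rw [S.cov] at hc
  refine ⟨c, hc, ?_⟩
  rw [← eB]
  funext σ
  have : In S.B (S.j.comp σ) := fun t => (S.θ (ipt q 1 one_ne_zero (σ t))).2.2
  show c _ = xB _
  rw [hce _ (Or.inr this), if_pos this]

theorem Stp.van (S : Stp F G q) (r : ℕ) (hV : ∀ l ≥ r + 2, Van l (univ : Set F)) (l : ℕ)
    (hl : r + (q + 1) + 2 ≤ l) : Van l (univ : Set G) := by
  obtain ⟨l, rfl⟩ : ∃ k, l = k + 1 := ⟨l - 1, by omega⟩
  rw [← S.cov]
  refine mv S.oA S.oB ?_ ?_ ?_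
  · exact van_iff.2 (van_of_dom S.hA (hV _ (by omega)))
  · exact van_iff.2 (van_of_dom S.hB (hV _ (by omega)))
  · refine van_iff.2 (van_of_dom S.h2 (van_iff.1 ?_))
    exact high (by omega) hV _ _ (by omega)

open Classical in
theorem Stp.main [Nonempty F] {q : ℕ} (S : Stp F G (q + 1)) {ds : List ℕ} {r : ℕ}
    {y : Coch F (r + 1)} (hy : ProdU ds r y) (hn : ¬ UCob y) (hd : ∀ d ∈ ds, d < q + 1)
    (hV : ∀ l ≥ r + 2, Van l (univ : Set F)) :
    ∃ y' : Coch G (r + (q + 2) + 1), IsProd univ (ds ++ [q + 2]) (r + (q + 2)) y' ∧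
      ¬ Cob univ y' := by
  obtain ⟨Y, hY, hYy⟩ := hy.lift (j := S.j) fun d h x hx => S.lift (hd d h) x hx
  obtain ⟨v, hv, -, hv'⟩ := mid (F := F) (q + 1)
  have cv := coc_iff.1 hv
  set w0 : Coch ↥(S.A ∩ S.B) (q + 1 + 1) := pb S.θ' (pb (incl _) v) with hw0
  set w : Coch G (q + 1 + 1) := exte w0 with hw
  have cw0 : Coc univ w0 := cv.pb fun _ _ => mem_univ _
  have cw : Coc (S.A ∩ S.B) w := by
    rw [coc_iff, hw, pb_exte]
    exact cw0
  obtain ⟨c, hc, hce⟩ := ext_small S.oA S.oB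
    (fun σ : Splx (q + 1 + 1 + 1) G => if In S.A σ then dl w σ else 0) (by
      rintro σ (hσ | hσ)
      · rw [dl_congr (V := S.A) (β := dl w) (fun τ hτ => if_pos hτ) σ hσ, dl_dl]
      · refine Finset.sum_eq_zero fun i _ => ?_
        show (if In S.A (σ.comp (sm i.succAbove)) then _ else _) = _
        split_ifs with h
        · exact cw _ fun t => ⟨h t, hσ _⟩
        · rfl)
  rw [S.cov] at hc
  refine ⟨cup rfl Y c, hY.append hc rfl, ?_⟩
  rintro ⟨η, hη⟩
  have hA : Coc S.A (η + cup (rfl : r + (q + 1) = _) Y w) := by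
    intro σ hσ
    rw [dl_add, Pi.add_apply, ← hη σ (fun _ => mem_univ _),
      leibniz rfl (by omega : r + 1 + (q + 1) = _) rfl, Pi.add_apply,
      cup_zero_left _ _ (hY.coc.mono (subset_univ S.A)) σ hσ, zero_add,
      cup_congr rfl (fun _ _ => rfl) (fun τ hτ => (hce τ (Or.inl hτ)).trans (if_pos hτ)) σ hσ, z2]
  have hB : Coc S.B η := by
    intro σ hσ
    rw [← hη σ (fun _ => mem_univ _)]
    refine cup_zero_right (V := S.B) _ _ (fun τ hτ => ?_) σ hσ
    rw [hce τ (Or.inr hτ)]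
    split_ifs with h
    · exact cw _ fun t => ⟨h t, hτ _⟩
    · rfl
  have vA : Cob S.A (η + cup (rfl : r + (q + 1) = _) Y w) :=
    van_iff.2 (van_of_dom S.hA (hV _ (by omega))) _ hA
  have vB : Cob S.B η := van_iff.2 (van_of_dom S.hB (hV _ (by omega))) _ hB
  have h3 : Cob (S.A ∩ S.B) (cup (rfl : r + (q + 1) = _) Y w) := by
    refine ((vA.mono inter_subset_left).add (vB.mono inter_subset_right)).congr fun σ _ => ?_
    simp only [Pi.add_apply]
    have := z2 (η σ)
    linear_combination - this
  rw [cob_iff, pb_cup, hw, pb_exte] at h3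
  have h4 := h3.pb (V := univ) (f := S.θ) fun _ _ => mem_univ _
  rw [pb_cup] at h4
  set Y1 : Coch (Rr F (q + 1 + 1)) (r + 1) := pb S.θ (pb (incl _) Y) with hY1
  have cY1 : Coc univ Y1 := (hY.coc.pb (V := univ) fun _ _ => mem_univ _).pb fun _ _ => mem_univ _
  have h5 : Cob univ (cup (rfl : r + (q + 1) = _) Y1 (pb (incl _) v + pb S.θ w0)) :=
    Cob.cup_right rfl cY1 (add_pb_id S.h1 cv)
  rw [cup_add_right] at h5
  refine hv' r _ rfl (exte Y1) ?_ ?_ ?_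
  · rw [coc_iff, pb_exte]; exact cY1
  · have h6 : (pb (jx (e0 1)) (exte Y1) : Coch F (r + 1)) = y := by
      have : (jx (e0 1) : C(F, ZF F)) = (incl (Rr F (q + 1 + 1))).comp (ipt _ 1 one_ne_zero) := rfl
      rw [this, ← pb_pb, pb_exte, ← hYy]
      rfl
    rwa [h6]
  · rw [cob_iff, pb_cup, pb_exte]
    exact h5.of_add h4
end step
end CT
end part7

section part8
open Set Quaternion
namespace CT
abbrev Hq := Quaternion ℝ
abbrev Vq (N : ℕ) := Fin N → Hq
abbrev Mq (N : ℕ) := Matrix (Fin N) (Fin N) Hq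
noncomputable abbrev Uq (N : ℕ) := unitary (Mq N)

section geo
variable {N : ℕ}

noncomputable def nrm (v : Vq N) : ℝ := Real.sqrt (∑ i, normSq (v i))
noncomputable def uv (v : Vq N) : Vq N := (nrm v)⁻¹ • v
noncomputable def ek (k : Fin N) : Vq N := Pi.single k 1

theorem sum_nonneg' (v : Vq N) : 0 ≤ ∑ i, normSq (v i) := Finset.sum_nonneg fun _ _ => normSq_nonneg

theorem nrm_sq (v : Vq N) : nrm v * nrm v = ∑ i, normSq (v i) := Real.mul_self_sqrt (sum_nonneg' v)

theorem nrm_nonneg (v : Vq N) : 0 ≤ nrm v := Real.sqrt_nonneg _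

theorem nrm_pos {v : Vq N} (h : v ≠ 0) : 0 < nrm v := by
  rcases eq_or_lt_of_le (nrm_nonneg v) with h0 | h0
  · exfalso
    apply h
    have h1 := nrm_sq v
    rw [← h0, mul_zero, eq_comm, Finset.sum_eq_zero_iff_of_nonneg fun _ _ => normSq_nonneg] at h1
    funext i
    exact normSq_eq_zero.1 (h1 i (Finset.mem_univ _))
  · exact h0

theorem nrm_smul {r : ℝ} (hr : 0 ≤ r) (v : Vq N) : nrm (r • v) = r * nrm v := by
  have : ∑ i, normSq ((r • v) i) = r ^ 2 * ∑ i, normSq (v i) := by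
    rw [Finset.mul_sum]
    exact Finset.sum_congr rfl fun i _ => by rw [Pi.smul_apply, normSq_smul]
  rw [nrm, this, Real.sqrt_mul (sq_nonneg r), Real.sqrt_sq hr, nrm]

theorem nrm_neg (v : Vq N) : nrm (-v) = nrm v := by
  simp [nrm]

theorem uv_neg (v : Vq N) : uv (-v) = - uv v := by
  rw [uv, nrm_neg, smul_neg, uv]

theorem uv_smul {r : ℝ} (hr : 0 < r) (v : Vq N) : uv (r • v) = uv v := by
  rw [uv, nrm_smul hr.le, smul_smul, uv]
  congr 1
  rw [mul_inv]
  field_simp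

theorem uv_of_one {v : Vq N} (h : nrm v = 1) : uv v = v := by rw [uv, h, inv_one, one_smul]

theorem nrm_uv {v : Vq N} (h : v ≠ 0) : nrm (uv v) = 1 := by
  rw [uv, nrm_smul (inv_nonneg.2 (nrm_nonneg v)), inv_mul_cancel₀ (nrm_pos h).ne']

theorem nrm_cont : Continuous (nrm : Vq N → ℝ) := by
  unfold nrm
  refine Real.continuous_sqrt.comp (continuous_finsetSum _ fun i _ => ?_)
  exact Quaternion.continuous_normSq.comp (continuous_apply i)

/-- projection away from the real line spanned by `ek k` -/
def Qp (k : Fin N) (v : Vq N) : Vq N := fun i => if i = k then v i - ((v i).re : Hq) else v i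

theorem Qp_cont (k : Fin N) : Continuous (Qp k) := by
  refine continuous_pi fun i => ?_
  unfold Qp
  split_ifs
  · exact (continuous_apply i).sub (Quaternion.continuous_coe.comp
      (Quaternion.continuous_re.comp (continuous_apply i)))
  · exact continuous_apply i

theorem Qp_smul (k : Fin N) (r : ℝ) (v : Vq N) : Qp k (r • v) = r • Qp k v := by
  funext i
  simp only [Qp, Pi.smul_apply]
  split_ifs
  · ext <;> simp
  · rfl

theorem Qp_sub_ek (k : Fin N) (r : ℝ) (v : Vq N) : Qp k (v + r • ek k) = Qp k v := by
  funext i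
  simp only [Qp, Pi.smul_apply, Pi.add_apply, ek]
  split_ifs with h
  · subst h
    simp only [Pi.single_eq_same]
    ext <;> simp
  · simp [h]

theorem Qp_eq (k : Fin N) (v : Vq N) : Qp k v = v + (-(v k).re) • ek k := by
  funext i
  simp only [Qp, Pi.smul_apply, Pi.add_apply, ek]
  split_ifs with h
  · subst h
    simp only [Pi.single_eq_same]
    ext <;> simp
  · simp [h]

theorem Qp_neg (k : Fin N) (v : Vq N) : Qp k (-v) = - Qp k v := by
  have := Qp_smul k (-1) v
  simpa using this

/-- good vectors -/
def Dm (k : Fin N) : Set (Vq N) := {v | (∀ i, k < i → v i = 0) ∧ (Qp k v ≠ 0 ∨ (v k).re < 0)}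
def DR (k : Fin N) : Set (Vq N) := {v | (∀ i, k < i → v i = 0) ∧ Qp k v ≠ 0}

theorem Dm_ne {k : Fin N} {v : Vq N} (h : v ∈ Dm k) : v ≠ 0 := by
  rintro rfl
  rcases h.2 with h | h
  · apply h; funext i; simp [Qp]
  · simp at h

theorem Dm_smul {k : Fin N} {v : Vq N} (h : v ∈ Dm k) {r : ℝ} (hr : 0 < r) : r • v ∈ Dm k := by
  refine ⟨fun i hi => by rw [Pi.smul_apply, h.1 i hi, smul_zero], ?_⟩
  rw [Qp_smul]
  rcases h.2 with h | h
  · left; exact smul_ne_zero hr.ne' h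
  · right; simpa using mul_neg_of_pos_of_neg hr h

theorem Dm_uv {k : Fin N} {v : Vq N} (h : v ∈ Dm k) : uv v ∈ Dm k :=
  Dm_smul h (inv_pos.2 (nrm_pos (Dm_ne h)))

theorem DR_smul {k : Fin N} {v : Vq N} (h : v ∈ DR k) {r : ℝ} (hr : r ≠ 0) : r • v ∈ DR k := by
  refine ⟨fun i hi => by rw [Pi.smul_apply, h.1 i hi, smul_zero], ?_⟩
  rw [Qp_smul]
  exact smul_ne_zero hr h.2

theorem DR_Dm {k : Fin N} {v : Vq N} (h : v ∈ DR k) : v ∈ Dm k := ⟨h.1, Or.inl h.2⟩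

theorem Dm_star (k : Fin N) : StarConvex ℝ (-ek k) (Dm k) := by
  intro v hv a b ha hb hab
  have e : a • -ek k + b • v = b • v + (-a) • ek k := by
    rw [smul_neg, neg_smul, add_comm]
  rw [e]
  refine ⟨fun i hi => ?_, ?_⟩
  · simp [hv.1 i hi, ek, hi.ne']
  · rw [Qp_sub_ek, Qp_smul]
    have e2 : ((b • v + (-a) • ek k) k).re = b * (v k).re - a := by
      simp [ek, sub_eq_add_neg]
    rw [e2]
    rcases eq_or_lt_of_le hb with h | h
    · right; rw [← h]; have : a = 1 := by linarith
      rw [this]; norm_num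
    · rcases hv.2 with h' | h'
      · left; exact smul_ne_zero h.ne' h'
      · right; have := mul_neg_of_pos_of_neg h h'; linarith

instance Dm_contr (k : Fin N) : ContractibleSpace (Dm k) :=
  (Dm_star k).contractibleSpace ⟨-ek k, fun i hi => by simp [ek, hi.ne'], Or.inr (by simp [ek])⟩

theorem unit_k {k : Fin N} {u : Vq N} (h : nrm u = 1) (hk : u k = 1) : u = ek k := by
  have h1 := nrm_sq u
  rw [h, ← Finset.add_sum_erase _ _ (Finset.mem_univ k), hk] at h1
  have h2 : ∑ i ∈ Finset.univ.erase k, normSq (u i) = 0 := by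
    have : (normSq (1 : Hq)) = 1 := map_one _
    linarith
  rw [Finset.sum_eq_zero_iff_of_nonneg fun _ _ => normSq_nonneg] at h2
  funext i
  by_cases hi : i = k
  · subst hi; simp [ek, hk]
  · rw [normSq_eq_zero.1 (h2 i (by simp [hi]))]; simp [ek, hi]

theorem Dm_unit {k : Fin N} {v : Vq N} (h : v ∈ Dm k) : uv v k ≠ 1 := by
  intro hk
  have h1 := unit_k (nrm_uv (Dm_ne h)) hk
  have h2 := (Dm_uv h).2
  rw [h1] at h2
  rcases h2 with h2 | h2
  · apply h2; funext i; by_cases hi : i = k <;> simp [Qp, ek, hi]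
  · simp [ek] at h2; linarith

noncomputable def wv (k : Fin N) (v : Vq N) : Vq N := ek k - uv v
noncomputable def cv (k : Fin N) (v : Vq N) : Hq := (star (wv k v k))⁻¹

theorem wv_sum {k : Fin N} {v : Vq N} (h : v ≠ 0) :
    ∑ i, star (wv k v i) * wv k v i = star (wv k v k) + wv k v k := by
  have h1 := nrm_sq (uv v)
  rw [nrm_uv h, ← Finset.add_sum_erase _ _ (Finset.mem_univ k)] at h1
  have h2 : ∑ i, star (wv k v i) * wv k v i = ((∑ i, normSq (wv k v i) : ℝ) : Hq) := by
    rw [← Quaternion.algebraMap_def, map_sum]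
    exact Finset.sum_congr rfl fun i _ => Quaternion.star_mul_self _
  have h3 : ∑ i, normSq (wv k v i) = 2 - 2 * (uv v k).re := by
    rw [← Finset.add_sum_erase _ _ (Finset.mem_univ k)]
    have h4 : ∑ i ∈ Finset.univ.erase k, normSq (wv k v i) =
        ∑ i ∈ Finset.univ.erase k, normSq (uv v i) := by
      refine Finset.sum_congr rfl fun i hi => ?_
      have : i ≠ k := by simpa using hi
      simp [wv, ek, this]
    rw [h4]
    have h5 : normSq (wv k v k) = 1 - 2 * (uv v k).re + normSq (uv v k) := by
      simp only [wv, ek, Pi.sub_apply, Pi.single_eq_same, Quaternion.normSq_def']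
      simp
      ring
    rw [h5]; linarith
  rw [h2, h3]
  simp only [wv, ek, Pi.sub_apply, Pi.single_eq_same]
  ext <;> simp
  ring

noncomputable def shm (k : Fin N) (v : Vq N) : Mq N :=
  fun i j => (1 : Mq N) i j - wv k v i * cv k v * star (wv k v j)

theorem wk_ne {k : Fin N} {v : Vq N} (h : v ∈ Dm k) : wv k v k ≠ 0 := by
  have := Dm_unit h
  simp only [wv, ek, Pi.sub_apply, Pi.single_eq_same]
  exact sub_ne_zero.2 this.symm

theorem shm_unitary {k : Fin N} {v : Vq N} (h : v ∈ Dm k) : shm k v ∈ unitary (Mq N) := by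
  set W : Matrix (Fin N) Unit Hq := Matrix.of fun i _ => wv k v i with hW
  set C : Matrix Unit Unit Hq := Matrix.of fun _ _ => cv k v with hC
  have hS : shm k v = 1 - W * C * W.conjTranspose := by
    ext1 i j
    simp [shm, hW, hC, Matrix.mul_apply]
  have hne := wk_ne h
  have hsne : star (wv k v k) ≠ 0 := star_ne_zero.2 hne
  have c1 : cv k v * star (wv k v k) = 1 := inv_mul_cancel₀ hsne
  have c2 : star (wv k v k) * cv k v = 1 := mul_inv_cancel₀ hsne
  have c3 : wv k v k * star (cv k v) = 1 := by simpa using congrArg star c1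
  have c4 : star (cv k v) * wv k v k = 1 := by simpa using congrArg star c2
  have hZ : W.conjTranspose * W = Matrix.of fun _ _ => star (wv k v k) + wv k v k := by
    ext1 i j
    simp only [Matrix.mul_apply, Matrix.conjTranspose_apply, hW, Matrix.of_apply]
    exact wv_sum (Dm_ne h)
  have k1 : C * (W.conjTranspose * W) * C.conjTranspose = C + C.conjTranspose := by
    rw [hZ]
    ext1 i j
    simp only [Matrix.mul_apply, hC, Matrix.of_apply, Matrix.conjTranspose_apply, Matrix.add_apply,
      Finset.univ_unique, Finset.sum_singleton]
    rw [mul_add, add_mul, c1, one_mul, mul_assoc, c3, mul_one, add_comm]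
  have k2 : C.conjTranspose * (W.conjTranspose * W) * C = C + C.conjTranspose := by
    rw [hZ]
    ext1 i j
    simp only [Matrix.mul_apply, hC, Matrix.of_apply, Matrix.conjTranspose_apply, Matrix.add_apply,
      Finset.univ_unique, Finset.sum_singleton]
    rw [mul_add, add_mul, c4, one_mul, mul_assoc, c2, mul_one, add_comm]
  have hT : star (shm k v) = 1 - W * C.conjTranspose * W.conjTranspose := by
    rw [hS, Matrix.star_eq_conjTranspose]
    simp [Matrix.conjTranspose_mul, Matrix.mul_assoc]
  rw [Unitary.mem_iff, hT, hS]
  have m1 : (W * C.conjTranspose * W.conjTranspose) * (W * C * W.conjTranspose) =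
      W * C * W.conjTranspose + W * C.conjTranspose * W.conjTranspose := by
    rw [← Matrix.add_mul, ← Matrix.mul_add, ← k2]
    simp only [Matrix.mul_assoc]
  have m2 : (W * C * W.conjTranspose) * (W * C.conjTranspose * W.conjTranspose) =
      W * C * W.conjTranspose + W * C.conjTranspose * W.conjTranspose := by
    rw [← Matrix.add_mul, ← Matrix.mul_add, ← k1]
    simp only [Matrix.mul_assoc]
  constructor
  · rw [sub_mul, one_mul, mul_sub, mul_one, m1]; abel
  · rw [sub_mul, one_mul, mul_sub, mul_one, m2]; abel

theorem shm_ek {k : Fin N} {v : Vq N} (h : v ∈ Dm k) : (shm k v).mulVec (ek k) = uv v := by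
  have hsne : star (wv k v k) ≠ 0 := star_ne_zero.2 (wk_ne h)
  rw [ek, Matrix.mulVec_single_one]
  funext i
  show shm k v i k = _
  rw [shm, mul_assoc, cv, inv_mul_cancel₀ hsne, mul_one, Matrix.one_apply]
  simp only [wv, ek, Pi.sub_apply, Pi.single_apply]
  abel

theorem shm_ei {k : Fin N} {v : Vq N} (h : v ∈ Dm k) {i : Fin N} (hi : k < i) :
    (shm k v).mulVec (ek i) = ek i := by
  rw [ek, Matrix.mulVec_single_one]
  funext j
  show shm k v j i = _
  have : wv k v i = 0 := by simp [wv, ek, hi.ne', uv, h.1 i hi]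
  rw [shm, this, star_zero, mul_zero, sub_zero, Matrix.one_apply, Pi.single_apply]

noncomputable def sh (k : Fin N) (v : Dm k) : Uq N := ⟨shm k v.1, shm_unitary v.2⟩

theorem sh_cont (k : Fin N) : Continuous (sh k) := by
  refine Continuous.subtype_mk ?_ _
  have h0 : Continuous fun v : Dm k => uv v.1 := by
    unfold uv
    exact ((nrm_cont.comp continuous_subtype_val).inv₀ fun v => (nrm_pos (Dm_ne v.2)).ne').smul
      continuous_subtype_val
  have h1 : Continuous fun v : Dm k => wv k v.1 := continuous_const.sub h0
  have h2 : ∀ i, Continuous fun v : Dm k => wv k v.1 i := fun i => (continuous_apply i).comp h1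
  have h3 : Continuous fun v : Dm k => cv k v.1 :=
    ((h2 k).star).inv₀ fun v => star_ne_zero.2 (wk_ne v.2)
  refine continuous_matrix fun i j => ?_
  exact continuous_const.sub (((h2 i).mul h3).mul (h2 j).star)

theorem sh_uv {k : Fin N} (v v' : Dm k) (h : uv v.1 = uv v'.1) : sh k v = sh k v' := by
  apply Subtype.ext
  show shm k v.1 = shm k v'.1
  unfold shm cv wv
  rw [h]

end geo
end CT
end part8

section part9
open Set Quaternion
namespace CT
section geo2
variable {N : ℕ}

noncomputable def ac (g : Uq N) (v : Vq N) : Vq N := (g : Mq N).mulVec v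

theorem ac_mul (g h : Uq N) (v : Vq N) : ac (g * h) v = ac g (ac h v) := by
  simp [ac, Matrix.mulVec_mulVec]

theorem ac_one (v : Vq N) : ac 1 v = v := by simp [ac]

theorem ac_inv {g : Uq N} {v w : Vq N} (h : ac g v = w) : ac g⁻¹ w = v := by
  rw [← h, ← ac_mul, inv_mul_cancel, ac_one]

theorem ac_smul (g : Uq N) (r : ℝ) (v : Vq N) : ac g (r • v) = r • ac g v :=
  Matrix.mulVec_smul _ _ _

noncomputable def Gk (N k : ℕ) : Subgroup (Uq N) where
  carrier := {g | ∀ i : Fin N, k ≤ i → ac g (ek i) = ek i}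
  mul_mem' := fun {a b} ha hb i hi => by rw [ac_mul, hb i hi, ha i hi]
  one_mem' := fun i _ => ac_one _
  inv_mem' := fun {a} ha i hi => ac_inv (ha i hi)

theorem Gk_mono {N k l : ℕ} (h : k ≤ l) : Gk N k ≤ Gk N l := fun _ hg i hi => hg i (h.trans hi)

theorem ac_cont (v : Vq N) : Continuous fun g : Uq N => ac g v :=
  continuous_subtype_val.matrix_mulVec continuous_const

variable (k : Fin N)

noncomputable def col (g : Gk N (k + 1)) : Vq N := ac g.1 (ek k)

theorem col_cont : Continuous (col k) := (ac_cont _).comp continuous_subtype_val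

theorem col_W (g : Gk N (k + 1)) (i : Fin N) (hi : k < i) : col k g i = 0 := by
  have h1 := ac_inv (g.2 i (by exact hi))
  have h2 := congrFun h1 k
  rw [ac, ek, Matrix.mulVec_single_one, Pi.single_eq_of_ne hi.ne] at h2
  have h3 : star ((g.1 : Mq N) i k) = 0 := h2
  rw [col, ac, ek, Matrix.mulVec_single_one]
  exact star_eq_zero.1 h3

theorem nrm_col (g : Gk N (k + 1)) : nrm (col k g) = 1 := by
  have h1 := congrFun (congrFun (Unitary.mem_iff.1 g.1.2).1 k) k
  rw [Matrix.mul_apply, Matrix.one_apply_eq] at h1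
  have h2 : ∀ j, col k g j = (g.1 : Mq N) j k := by
    intro j
    rw [col, ac, ek, Matrix.mulVec_single_one]; rfl
  have h3 : ((∑ j, normSq (col k g j) : ℝ) : Hq) = ((1 : ℝ) : Hq) := by
    rw [← Quaternion.algebraMap_def, map_sum, map_one, ← h1]
    refine Finset.sum_congr rfl fun i _ => ?_
    rw [h2, Matrix.star_apply]
    exact (Quaternion.star_mul_self _).symm
  rw [nrm, Quaternion.coe_injective h3, Real.sqrt_one]

def Ae (ε : ℝ) : Set (Gk N (k + 1)) := {g | ε • col k g ∈ Dm k}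

theorem Ae_open (ε : ℝ) : IsOpen (Ae k ε) := by
  have : Ae k ε = {g | Qp k (ε • col k g) ≠ 0} ∪ {g | ((ε • col k g) k).re < 0} := by
    ext g
    refine ⟨fun h => h.2, fun h => ⟨fun i hi => ?_, h⟩⟩
    rw [Pi.smul_apply, col_W k g i hi, smul_zero]
  rw [this]
  have h1 : Continuous fun g => ε • col k g := (col_cont k).const_smul ε
  refine (isOpen_ne_fun ((Qp_cont k).comp h1) continuous_const).union (isOpen_lt ?_ continuous_const)
  exact Quaternion.continuous_re.comp ((continuous_apply k).comp h1)

theorem mem_inter (g : Gk N (k + 1)) : g ∈ Ae k 1 ∩ Ae k (-1) ↔ col k g ∈ DR k := by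
  constructor
  · rintro ⟨h1, h2⟩
    refine ⟨col_W k g, ?_⟩
    have h1 := h1.2
    have h2 := h2.2
    rw [one_smul] at h1
    rw [neg_one_smul, Qp_neg] at h2
    rcases h1 with h1 | h1
    · exact h1
    · rcases h2 with h2 | h2
      · exact neg_ne_zero.1 h2
      · simp at h2; linarith
  · exact fun h => ⟨DR_Dm (DR_smul h one_ne_zero), DR_Dm (DR_smul h (by norm_num))⟩

theorem Ae_cov : Ae k 1 ∪ Ae k (-1) = univ := by
  refine eq_univ_of_forall fun g => ?_
  by_cases h : Qp k (col k g) = 0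
  · have h1 : (col k g k).re ≠ 0 := by
      intro h0
      rw [Qp_eq, h0, neg_zero, zero_smul, add_zero] at h
      have := nrm_col k g
      rw [h] at this
      simp [nrm] at this
    rcases lt_or_gt_of_ne h1 with h1 | h1
    · left
      exact ⟨fun i hi => by rw [Pi.smul_apply, col_W k g i hi, smul_zero], Or.inr (by simpa using h1)⟩
    · right
      exact ⟨fun i hi => by rw [Pi.smul_apply, col_W k g i hi, smul_zero], Or.inr (by simpa using h1)⟩
  · exact Or.inl ((mem_inter k g).2 ⟨col_W k g, h⟩).1

theorem uv_eps {ε : ℝ} (hε : ε * ε = 1) (v : Vq N) : uv (ε • v) = ε • uv v := by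
  rcases mul_self_eq_one_iff.1 hε with rfl | rfl
  · simp
  · simp [uv_neg]

noncomputable def mkq (a b c d : ℝ) : Hq := QuaternionAlgebra.mk a b c d
@[simp] theorem mkq_re (a b c d : ℝ) : (mkq a b c d).re = a := rfl
@[simp] theorem mkq_imI (a b c d : ℝ) : (mkq a b c d).imI = b := rfl
@[simp] theorem mkq_imJ (a b c d : ℝ) : (mkq a b c d).imJ = c := rfl
@[simp] theorem mkq_imK (a b c d : ℝ) : (mkq a b c d).imK = d := rfl

theorem mk_cont {X : Type*} [TopologicalSpace X] {a b c d : X → ℝ} (ha : Continuous a)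
    (hb : Continuous b) (hc : Continuous c) (hd : Continuous d) :
    Continuous fun x => mkq (a x) (b x) (c x) (d x) := by
  have : (fun x => mkq (a x) (b x) (c x) (d x)) = fun x => a x • mkq 1 0 0 0 +
      b x • mkq 0 1 0 0 + c x • mkq 0 0 1 0 + d x • mkq 0 0 0 1 := by
    funext x
    ext <;> simp
  rw [this]
  fun_prop

noncomputable def toVec (x : ℕ → ℝ) : Vq N := fun i => if k < i then 0 else
  mkq (if i = k then 0 else x (4 * i + 3)) (x (4 * i)) (x (4 * i + 1)) (x (4 * i + 2))

theorem toVec_cont : Continuous (toVec k) := by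
  refine continuous_pi fun i => ?_
  unfold toVec
  split_ifs
  · exact continuous_const
  · exact mk_cont continuous_const (continuous_apply _) (continuous_apply _) (continuous_apply _)
  · exact mk_cont (continuous_apply _) (continuous_apply _) (continuous_apply _) (continuous_apply _)

noncomputable def cmp : ℕ → Hq → ℝ
  | 0, q => q.imI
  | 1, q => q.imJ
  | 2, q => q.imK
  | _ + 3, q => q.re

theorem cmp_cont (a : ℕ) : Continuous (cmp a) := by
  match a with
  | 0 => exact Quaternion.continuous_imI
  | 1 => exact Quaternion.continuous_imJ
  | 2 => exact Quaternion.continuous_imK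
  | _ + 3 => exact Quaternion.continuous_re

theorem cmp_smul (a : ℕ) (r : ℝ) (q : Hq) : cmp a (r • q) = r * cmp a q := by
  match a with
  | 0 => simp [cmp]
  | 1 => simp [cmp]
  | 2 => simp [cmp]
  | _ + 3 => simp [cmp]

noncomputable def coords (v : Vq N) : ℕ → ℝ := fun j =>
  if h : j < 4 * k + 3 then cmp (j % 4) (v ⟨j / 4, by have := k.2; omega⟩) else 0

theorem coords_cont : Continuous (coords k) := by
  refine continuous_pi fun j => ?_
  unfold coords
  split_ifs
  · exact (cmp_cont _).comp (continuous_apply _)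
  · exact continuous_const

theorem coords_smul (r : ℝ) (v : Vq N) (j : ℕ) : coords k (r • v) j = r * coords k v j := by
  unfold coords
  split_ifs
  · exact cmp_smul _ _ _
  · simp

theorem coords_val (v : Vq N) (i : Fin N) (a : ℕ) (ha : a < 4) (h : 4 * (i : ℕ) + a < 4 * k + 3) :
    coords k v (4 * i + a) = cmp a (v i) := by
  rw [coords, dif_pos h]
  have h1 : (4 * (i : ℕ) + a) % 4 = a := by omega
  have h2 : (⟨(4 * (i : ℕ) + a) / 4, by have := k.2; omega⟩ : Fin N) = i := Fin.ext (by
    show (4 * (i : ℕ) + a) / 4 = i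
    omega)
  rw [h1, h2]

theorem toVec_coords (v : Vq N) (hv : ∀ i, k < i → v i = 0) : toVec k (coords k v) = Qp k v := by
  funext i
  unfold toVec Qp
  by_cases h : k < i
  · rw [if_pos h, if_neg h.ne', hv i h]
  · rw [if_neg h]
    have h' : (i : ℕ) ≤ k := not_lt.1 h
    have e0 := coords_val k v i 0 (by omega) (by omega)
    have e1 := coords_val k v i 1 (by omega) (by omega)
    have e2 := coords_val k v i 2 (by omega) (by omega)
    rw [add_zero] at e0
    rw [e0, e1, e2]
    split_ifs with hi
    · ext <;> simp [cmp]
    · have : (i : ℕ) ≠ k := fun h => hi (Fin.ext h)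
      have e3 := coords_val k v i 3 (by omega) (by omega)
      rw [e3]
      ext <;> simp [cmp]

theorem coords_toVec (x : ℕ → ℝ) (j : ℕ) (hj : j < 4 * k + 3) : coords k (toVec k x) j = x j := by
  obtain ⟨i, a, ha, rfl⟩ : ∃ (i : Fin N) (a : ℕ), a < 4 ∧ j = 4 * (i : ℕ) + a :=
    ⟨⟨j / 4, by have := k.2; omega⟩, j % 4, Nat.mod_lt _ (by norm_num), (Nat.div_add_mod j 4).symm⟩
  rw [coords_val k _ i a ha hj, toVec]
  have hk : ¬ k < i := by
    intro h
    have : (k : ℕ) < i := h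
    omega
  rw [if_neg hk]
  interval_cases a
  · rfl
  · rfl
  · rfl
  · have : ¬ i = k := by
      intro h
      have : (i : ℕ) = (k : ℕ) := congrArg Fin.val h
      omega
    rw [if_neg this]
    rfl

theorem Qp_toVec (x : ℕ → ℝ) : Qp k (toVec k x) = toVec k x := by
  have : (toVec k x k).re = 0 := by simp [toVec]
  rw [Qp_eq, this, neg_zero, zero_smul, add_zero]

theorem toVec_DR {F : Type*} {z : ZF F} (hz : z ∈ Rr F (4 * k + 1 + 1 + 1)) :
    toVec k z.2 ∈ DR k := by
  refine ⟨fun i hi => by rw [toVec, if_pos hi], fun h => ?_⟩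
  obtain ⟨j, hj, hne⟩ := hz
  apply hne
  rw [Qp_toVec] at h
  rw [← coords_toVec k z.2 j (by omega), h]
  have := coords_smul k 0 (0 : Vq N) j
  simpa using this

theorem coords_R {F : Type*} (f : F) {v : Vq N} (hv : v ∈ DR k) :
    (f, coords k v) ∈ Rr F (4 * k + 1 + 1 + 1) := by
  by_contra hc
  have h0 : coords k v = 0 := by
    funext j
    by_cases hj : j < 4 * k + 3
    · by_contra h
      exact hc ⟨j, by omega, h⟩
    · rw [coords, dif_neg hj]; rfl
  apply hv.2
  rw [← toVec_coords k v hv.1, h0]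
  funext i
  unfold toVec
  split_ifs <;> rfl

end geo2
end CT
end part9

section part10
open Set Quaternion
namespace CT
section geo3
variable {N : ℕ} (k : Fin N)


theorem sh_ek (v : Dm k) : ac (sh k v) (ek k) = uv v.1 := shm_ek v.2
theorem sh_ei (v : Dm k) {i : Fin N} (hi : k < i) : ac (sh k v) (ek i) = ek i := shm_ei v.2 hi

noncomputable def vz : Vq N := toVec k (e0 1)
theorem vz_DR : vz k ∈ DR k :=
  toVec_DR (F := Unit) k (z := ((), e0 1)) (e0_mem 1 one_ne_zero _ (by omega) _)

theorem eps_ne {ε : ℝ} (hε : ε * ε = 1) : ε ≠ 0 := by rintro rfl; simp at hε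

noncomputable def vE {ε : ℝ} (hε : ε * ε = 1) : Dm k := ⟨ε • vz k, DR_Dm (DR_smul (vz_DR k) (eps_ne hε))⟩

noncomputable def cE {ε : ℝ} (hε : ε * ε = 1) : Uq N := (sh k (vE k hε))⁻¹ * sh k ⟨vz k, DR_Dm (vz_DR k)⟩

theorem smul_smul_eps {ε : ℝ} (hε : ε * ε = 1) (v : Vq N) : ε • ε • v = v := by
  rw [smul_smul, hε, one_smul]

theorem cE_ek {ε : ℝ} (hε : ε * ε = 1) : ac (cE k hε) (ek k) = ε • ek k := by
  have h1 := ac_inv (sh_ek k (vE k hε))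
  rw [vE, uv_eps hε, ac_smul] at h1
  rw [cE, ac_mul, sh_ek, ← h1, smul_smul_eps hε]
  rfl

theorem cE_ei {ε : ℝ} (hε : ε * ε = 1) {i : Fin N} (hi : k < i) : ac (cE k hε) (ek i) = ek i := by
  rw [cE, ac_mul, sh_ei k _ hi]
  exact ac_inv (sh_ei k _ hi)

theorem cE_one : cE k (mul_one (1 : ℝ)) = 1 := by
  rw [cE, sh_uv (vE k (mul_one (1 : ℝ))) ⟨vz k, DR_Dm (vz_DR k)⟩ (congrArg uv (one_smul ℝ (vz k))), inv_mul_cancel]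

noncomputable def pEf {ε : ℝ} (hε : ε * ε = 1) (g : Ae k ε) : Gk N k :=
  ⟨(cE k hε)⁻¹ * ((sh k ⟨ε • col k g.1, g.2⟩)⁻¹ * g.1.1), by
    intro i hi
    rw [ac_mul, ac_mul]
    rcases eq_or_lt_of_le (show k ≤ i from hi) with rfl | hi
    · have h1 := ac_inv (sh_ek k ⟨ε • col k g.1, g.2⟩)
      have h2 := ac_inv (cE_ek k hε)
      rw [uv_eps hε, uv_of_one (nrm_col k g.1), ac_smul] at h1
      rw [ac_smul] at h2
      change ac (cE k hε)⁻¹ (ac _ (col k g.1)) = _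
      rw [← smul_smul_eps hε (ac _ (col k g.1)), h1, ac_smul, h2]
    · rw [g.1.2 i (by exact hi), ac_inv (sh_ei k _ hi), ac_inv (cE_ei k hε hi)]⟩

noncomputable def pE {ε : ℝ} (hε : ε * ε = 1) : C(Ae k ε, Gk N k) :=
  ⟨pEf k hε, by
    refine Continuous.subtype_mk ?_ _
    refine continuous_const.mul ((Continuous.inv ?_).mul (continuous_subtype_val.comp continuous_subtype_val))
    exact (sh_cont k).comp
      ((((col_cont k).comp continuous_subtype_val).const_smul ε).subtype_mk _)⟩

noncomputable def mf {ε : ℝ} (hε : ε * ε = 1) (x : Dm k × Gk N k) : Gk N (k + 1) :=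
  ⟨sh k x.1 * (cE k hε * x.2.1), by
    intro i hi
    have hi' : k < i := hi
    rw [ac_mul, ac_mul, x.2.2 i (by omega), cE_ei k hε hi', sh_ei k _ hi']⟩

theorem mf_cont {ε : ℝ} (hε : ε * ε = 1) : Continuous (mf k hε) :=
  Continuous.subtype_mk (((sh_cont k).comp continuous_fst).mul
    (continuous_const.mul (continuous_subtype_val.comp continuous_snd))) _

theorem col_mf {ε : ℝ} (hε : ε * ε = 1) (x : Dm k × Gk N k) : col k (mf k hε x) = ε • uv x.1.1 := by
  rw [col, mf, ac_mul, ac_mul, x.2.2 k le_rfl, cE_ek, ac_smul, sh_ek]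

theorem mE_mem {ε : ℝ} (hε : ε * ε = 1) (x : Dm k × Gk N k) : mf k hε x ∈ Ae k ε := by
  change ε • col k _ ∈ Dm k
  rw [col_mf, smul_smul_eps hε]
  exact Dm_uv x.1.2

noncomputable def mE {ε : ℝ} (hε : ε * ε = 1) : C(Dm k × Gk N k, Ae k ε) :=
  ⟨fun x => ⟨mf k hε x, mE_mem k hε x⟩, (mf_cont k hε).subtype_mk _⟩

noncomputable def colE (ε : ℝ) : C(Ae k ε, Dm k) :=
  ⟨fun g => ⟨ε • col k g.1, g.2⟩,
    (((col_cont k).comp continuous_subtype_val).const_smul ε).subtype_mk _⟩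

theorem mE_id {ε : ℝ} (hε : ε * ε = 1) :
    (mE k hε).comp ((colE k ε).prodMk (pE k hε)) = ContinuousMap.id _ := by
  ext g : 3
  change sh k _ * (cE k hε * ((cE k hε)⁻¹ * ((sh k _)⁻¹ * g.1.1))) = g.1.1
  rw [mul_inv_cancel_left]
  exact mul_inv_cancel_left _ _

theorem mE_sec {ε : ℝ} (hε : ε * ε = 1) (x : Dm k × Gk N k) : pE k hε (mE k hε x) = x.2 := by
  have h : sh k ⟨ε • col k (mf k hε x), mE_mem k hε x⟩ = sh k x.1 := by
    apply sh_uv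
    change uv (ε • col k (mf k hε x)) = _
    rw [col_mf, smul_smul_eps hε, uv_of_one (nrm_uv (Dm_ne x.1.2))]
  apply Subtype.ext
  change (cE k hε)⁻¹ * ((sh k ⟨ε • col k (mf k hε x), mE_mem k hε x⟩)⁻¹ * (sh k x.1 * (cE k hε * x.2.1))) = x.2.1
  rw [h, inv_mul_cancel_left, inv_mul_cancel_left]

theorem hom_contr {X Z : Type*} [TopologicalSpace X] [TopologicalSpace Z] [ContractibleSpace Z]
    (f g : C(X, Z)) : f.Homotopic g := by
  obtain ⟨z, hz⟩ := id_nullhomotopic Z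
  have h1 : ∀ f : C(X, Z), f.Homotopic (ContinuousMap.const X z) := fun f =>
    hz.comp (ContinuousMap.Homotopic.refl f)
  exact (h1 f).trans (h1 g).symm

theorem hom_E {ε : ℝ} (hε : ε * ε = 1) :
    ((mE k hε).comp ((ContinuousMap.const _ (vE k hε)).prodMk (pE k hε))).Homotopic
      (ContinuousMap.id _) := by
  rw [← mE_id k hε]
  refine (ContinuousMap.Homotopic.refl _).comp ?_
  exact (hom_contr _ _).prodMk (ContinuousMap.Homotopic.refl _)

theorem mAB_mem (x : DR k × Gk N k) : mf k (mul_one 1) (⟨x.1.1, DR_Dm x.1.2⟩, x.2) ∈ Ae k 1 ∩ Ae k (-1) := by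
  rw [mem_inter, col_mf, one_smul, uv]
  exact DR_smul x.1.2 (inv_ne_zero (nrm_pos (Dm_ne (DR_Dm x.1.2))).ne')

noncomputable def mAB : C(DR k × Gk N k, ↥(Ae k 1 ∩ Ae k (-1))) :=
  ⟨fun x => ⟨mf k (mul_one 1) (⟨x.1.1, DR_Dm x.1.2⟩, x.2), mAB_mem k x⟩,
    ((mf_cont k _).comp (by fun_prop)).subtype_mk _⟩

noncomputable def colR : C(↥(Ae k 1 ∩ Ae k (-1)), DR k) :=
  ⟨fun g => ⟨col k g.1, (mem_inter k g.1).1 g.2⟩,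
    ((col_cont k).comp continuous_subtype_val).subtype_mk _⟩

theorem mAB_id : (mAB k).comp ((colR k).prodMk ((pE k (mul_one 1)).comp (inlA _ _))) =
    ContinuousMap.id _ := by
  have h := mE_id k (mul_one (1 : ℝ))
  ext g : 3
  have h1 := congrArg Subtype.val (DFunLike.congr_fun h ⟨g.1, g.2.1⟩)
  refine Eq.trans ?_ (congrArg Subtype.val h1)
  change sh k _ * _ = sh k _ * _
  congr 1
  apply sh_uv
  change uv (col k _) = uv ((1 : ℝ) • col k _)
  rw [one_smul]

noncomputable def thf (z : Rr (Gk N k) (4 * k + 1 + 1 + 1)) : DR k := ⟨toVec k z.1.2, toVec_DR k z.2⟩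

noncomputable def thC : C(Rr (Gk N k) (4 * k + 1 + 1 + 1), DR k × Gk N k) :=
  ⟨fun z => (thf k z, z.1.1), by
    refine Continuous.prodMk (Continuous.subtype_mk ((toVec_cont k).comp ?_) _) ?_
    · exact continuous_snd.comp continuous_subtype_val
    · exact continuous_fst.comp continuous_subtype_val⟩

noncomputable def th : C(Rr (Gk N k) (4 * k + 1 + 1 + 1), ↥(Ae k 1 ∩ Ae k (-1))) := (mAB k).comp (thC k)

noncomputable def thR : C(DR k × Gk N k, Rr (Gk N k) (4 * k + 1 + 1 + 1)) :=
  ⟨fun x => ⟨(x.2, coords k x.1.1), coords_R k _ x.1.2⟩,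
    (continuous_snd.prodMk ((coords_cont k).comp (continuous_subtype_val.comp continuous_fst))).subtype_mk _⟩

noncomputable def th' : C(↥(Ae k 1 ∩ Ae k (-1)), Rr (Gk N k) (4 * k + 1 + 1 + 1)) :=
  (thR k).comp ((colR k).prodMk ((pE k (mul_one 1)).comp (inlA _ _)))

theorem hh2 : ((th k).comp (th' k)).Homotopic (ContinuousMap.id _) := by
  rw [← mAB_id k]
  refine ContinuousMap.Homotopic.comp (f₀ := (thC k).comp (th' k)) (ContinuousMap.Homotopic.refl (mAB k)) ?_
  have hm : ∀ (t : unitInterval) (g : ↥(Ae k 1 ∩ Ae k (-1))),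
      col k g.1 + (((t : ℝ) - 1) * (col k g.1 k).re) • ek k ∈ DR k := by
    intro t g
    have hg := (mem_inter k g.1).1 g.2
    refine ⟨fun i hi => ?_, by rw [Qp_sub_ek]; exact hg.2⟩
    simp [ek, hg.1 i hi, hi.ne']
  have hc : Continuous fun x : unitInterval × ↥(Ae k 1 ∩ Ae k (-1)) => col k x.2.1 :=
    (col_cont k).comp (continuous_subtype_val.comp continuous_snd)
  refine ⟨⟨⟨fun x => (⟨_, hm x.1 x.2⟩, pE k (mul_one 1) (inlA _ _ x.2)), ?_⟩, ?_, ?_⟩⟩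
  · have hr : Continuous fun x : unitInterval × ↥(Ae k 1 ∩ Ae k (-1)) => (col k x.2.1 k).re :=
      Quaternion.continuous_re.comp ((continuous_apply k).comp hc)
    refine Continuous.prodMk (Continuous.subtype_mk ?_ _) ?_
    · fun_prop
    · exact (map_continuous _).comp ((map_continuous _).comp continuous_snd)
  · intro g
    refine Prod.ext (Subtype.ext ?_) rfl
    change col k g.1 + (((0 : ℝ) - 1) * (col k g.1 k).re) • ek k = toVec k (coords k (col k g.1))
    rw [toVec_coords k _ (col_W k _), Qp_eq, zero_sub, neg_one_mul]
  · intro g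
    refine Prod.ext (Subtype.ext ?_) rfl
    change col k g.1 + (((1 : ℝ) - 1) * (col k g.1 k).re) • ek k = col k g.1
    rw [sub_self, zero_mul, zero_smul, add_zero]

theorem th'_th (z : Rr (Gk N k) (4 * k + 1 + 1 + 1)) :
    (th' k (th k z)).1 = (z.1.1, coords k (uv (toVec k z.1.2))) := by
  refine Prod.ext ?_ ?_
  · exact mE_sec k (mul_one (1 : ℝ)) (⟨(thf k z).1, DR_Dm (thf k z).2⟩, z.1.1)
  · change coords k (col k (mf k _ _)) = _
    rw [col_mf, one_smul]
    rfl

theorem hh1 : ((th' k).comp (th k)).Homotopic (ContinuousMap.id _) := by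
  have hm : ∀ (t : unitInterval) (z : Rr (Gk N k) (4 * k + 1 + 1 + 1)),
      ((z.1.1, fun j => (1 - (t : ℝ)) * coords k (uv (toVec k z.1.2)) j + t * z.1.2 j) : ZF (Gk N k)) ∈
        Rr (Gk N k) (4 * k + 1 + 1 + 1) := by
    intro t z
    obtain ⟨j, hj, hne⟩ := z.2
    refine ⟨j, hj, ?_⟩
    have hp : 0 < (nrm (toVec k z.1.2))⁻¹ := inv_pos.2 (nrm_pos (Dm_ne (DR_Dm (thf k z).2)))
    change (1 - (t : ℝ)) * coords k (uv (toVec k z.1.2)) j + t * z.1.2 j ≠ 0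
    rw [uv, coords_smul, coords_toVec k _ j (by omega), ← mul_assoc, ← add_mul]
    refine mul_ne_zero ?_ hne
    have h0 := t.2.1
    have h1 := t.2.2
    rcases eq_or_lt_of_le h0 with h | h
    · rw [← h]; simpa using hp.ne'
    · have := mul_nonneg (sub_nonneg.2 h1) hp.le
      exact (by linarith : (0 : ℝ) < _).ne'
  have hz : Continuous fun x : unitInterval × Rr (Gk N k) (4 * k + 1 + 1 + 1) => x.2.1.2 :=
    continuous_snd.comp (continuous_subtype_val.comp continuous_snd)
  have hcc : Continuous fun x : unitInterval × Rr (Gk N k) (4 * k + 1 + 1 + 1) => coords k (uv (toVec k x.2.1.2)) := by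
    have := continuous_snd.comp (continuous_subtype_val.comp
      ((map_continuous ((th' k).comp (th k))).comp (continuous_snd (X := unitInterval))))
    refine this.congr fun x => ?_
    exact congrArg Prod.snd (th'_th k x.2)
  refine ⟨⟨⟨fun x => ⟨_, hm x.1 x.2⟩, ?_⟩, ?_, ?_⟩⟩
  · refine Continuous.subtype_mk (Continuous.prodMk ?_ ?_) _
    · exact continuous_fst.comp (continuous_subtype_val.comp continuous_snd)
    · refine continuous_pi fun j => Continuous.add (Continuous.mul ?_ ?_) (Continuous.mul ?_ ?_)
      · fun_prop
      · exact (continuous_apply j).comp hcc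
      · fun_prop
      · exact (continuous_apply j).comp hz
  · intro z
    refine Subtype.ext ?_
    refine Eq.trans ?_ (th'_th k z).symm
    refine Prod.ext rfl (funext fun j => ?_)
    change (1 - (0 : ℝ)) * coords k (uv (toVec k z.1.2)) j + 0 * z.1.2 j = _
    ring
  · intro z
    refine Subtype.ext ?_
    refine Prod.ext rfl (funext fun j => ?_)
    change (1 - (1 : ℝ)) * coords k (uv (toVec k z.1.2)) j + 1 * z.1.2 j = z.1.2 j
    ring

theorem neg_neg_one : (-1 : ℝ) * (-1) = 1 := by norm_num

theorem jA : (inlA (Ae k 1) (Ae k (-1))).comp ((th k).comp (ipt (4 * k + 1 + 1) 1 one_ne_zero)) =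
    (mE k (mul_one 1)).comp ((ContinuousMap.const _ (vE k (mul_one 1))).prodMk (ContinuousMap.id _)) := by
  ext f : 3
  change sh k _ * _ = sh k _ * _
  congr 1
  apply sh_uv
  change uv (vz k) = uv ((1 : ℝ) • vz k)
  rw [one_smul]

theorem jB : (inlB (Ae k 1) (Ae k (-1))).comp ((th k).comp (ipt (4 * k + 1 + 1) 1 one_ne_zero)) =
    (mE k neg_neg_one).comp ((ContinuousMap.const _ (vE k neg_neg_one)).prodMk (ContinuousMap.id _)) := by
  ext f : 3
  change sh k ⟨vz k, DR_Dm (vz_DR k)⟩ * (cE k (mul_one 1) * f.1) = sh k (vE k neg_neg_one) * (cE k neg_neg_one * f.1)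
  rw [cE_one, one_mul, cE, mul_assoc, mul_inv_cancel_left]

noncomputable def stp : Stp (Gk N k) (Gk N (k + 1)) (4 * k + 1 + 1) where
  A := Ae k 1
  B := Ae k (-1)
  oA := Ae_open k 1
  oB := Ae_open k (-1)
  cov := Ae_cov k
  θ := th k
  θ' := th' k
  h1 := hh1 k
  h2 := hh2 k
  pA := pE k (mul_one 1)
  pB := pE k neg_neg_one
  eA := by
    rw [jA]
    ext f : 1
    exact mE_sec k _ _
  eB := by
    rw [jB]
    ext f : 1
    exact mE_sec k _ _
  hA := by
    rw [jA]
    exact hom_E k _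
  hB := by
    rw [jB]
    exact hom_E k _

end geo3
end CT
end part10

section part11
open Set Quaternion
namespace CT
section fin
variable {N : ℕ}

theorem Gk_zero (g : Gk N 0) : g = 1 := by
  apply Subtype.ext
  apply Subtype.ext
  funext i
  funext j
  have h := congrFun (g.2 j (Nat.zero_le _)) i
  rw [ac, ek, Matrix.mulVec_single_one] at h
  change (g.1 : Mq N) i j = (1 : Mq N) i j
  rw [Matrix.one_apply]
  refine Eq.trans h ?_
  rw [Pi.single_apply]

theorem Gk_contr : ContractibleSpace (Gk N 0) := by
  have : Subsingleton (Gk N 0) := ⟨fun a b => (Gk_zero a).trans (Gk_zero b).symm⟩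
  have : Unique (Gk N 0) := ⟨⟨1⟩, Gk_zero⟩
  infer_instance

theorem ind (k : ℕ) (hk : k ≤ N) : ∃ (r : ℕ) (y : Coch (Gk N k) (r + 1)),
    ProdU (deg 0 k) r y ∧ ¬ UCob y ∧ ∀ l ≥ r + 2, Van l (univ : Set (Gk N k)) := by
  induction k with
  | zero =>
    refine ⟨0, fun _ => 1, .unit, fun h => ?_, fun l _ => ?_⟩
    · have := h.2 rfl (ContinuousMap.const _ 1)
      exact one_ne_zero this
    · have := Gk_contr (N := N)
      have : ContractibleSpace (univ : Set (Gk N 0)) :=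
        (Homeomorph.Set.univ (Gk N 0)).contractibleSpace
      exact van_contractible _ l
  | succ k ih =>
    obtain ⟨r, y, hy, hn, hV⟩ := ih (by omega)
    let S := stp (N := N) ⟨k, by omega⟩
    obtain ⟨y', h1, h2⟩ := Stp.main (q := 4 * k + 1) S hy hn (by
      intro d hd
      simp [deg] at hd
      obtain ⟨a, ha, rfl⟩ := hd
      omega) hV
    refine ⟨_, y', ?_, fun h => h2 h.1, fun l hl => ?_⟩
    · rw [deg_append]
      exact .prod _ _ _ h1
    · exact S.van r hV l hl

theorem final (n : ℕ) (hn : 2 ≤ n) {Y : Type*} [TopologicalSpace Y] (a : C(Gk n n, Y)) (b : C(Y, Gk n n))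
    (hab : (b.comp a).Homotopic (ContinuousMap.id _)) (U : Finset (Set Y))
    (h1 : ∀ s ∈ U, IsOpen s) (h2 : ⋃₀ (↑U : Set (Set Y)) = univ)
    (h3 : ∀ T ⊆ U, T.Nonempty → (⋂₀ (↑T : Set (Set Y))).Nonempty → ContractibleSpace ↥(⋂₀ (↑T : Set (Set Y)))) :
    (8 * n ^ 3 + 9 * n ^ 2 + 7 * n + 12) / 6 ≤ U.card := by
  classical
  obtain ⟨r, y, hy, hny, -⟩ := ind (N := n) n le_rfl
  have hlen : (deg 0 n).length = n := by simp [deg]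
  have hP : IsProd univ (deg 0 n) r y ∧ r ≠ 0 := by
    generalize deg 0 n = ds at *
    cases hy with
    | unit => simp at hlen; omega
    | prod _ _ _ h =>
      refine ⟨h, ?_⟩
      cases h with
      | one => omega
      | cons d x ds r y r' h => omega
  have hnc : ¬ Cob univ y := fun h => hny ⟨h, fun h0 => absurd h0 hP.2⟩
  rw [cnt_final n hn]
  have hun : un U (id : Set Y → Set Y) = univ := by
    rw [← h2]; ext z; simp [un]
  have hitr : ∀ T : Finset (Set Y), itr T (id : Set Y → Set Y) = ⋂₀ (↑T : Set (Set Y)) := by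
    intro T; ext z; simp [itr]
  refine main_count (deg 0 n) U id ⟨h1, ?_⟩ r (pb b y) ?_ ?_ (by omega) (deg_pw 0 n)
  · intro T hT hne hn2 l
    rw [hitr] at hn2 ⊢
    have := h3 T hT hne hn2
    exact van_contractible _ l
  · exact hP.1.pb fun _ _ => mem_univ _
  · rw [hun]
    intro hc
    apply hnc
    refine (add_pb_id hab hP.1.coc).of_add ?_
    exact hc.pb (V := univ) (f := a) fun _ _ => mem_univ _

end fin
end CT
end part11

section partF
open CT

noncomputable def CT.toS (n : ℕ) : C(Gk n n, Sp n) :=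
  ⟨fun g => ⟨(g.1 : Mq n), (Unitary.mem_iff.1 g.1.2).1⟩,
    Continuous.subtype_mk (continuous_subtype_val.comp continuous_subtype_val) _⟩

noncomputable def CT.fromS (n : ℕ) : C(Sp n, Gk n n) :=
  ⟨fun A => ⟨⟨A.1, Unitary.mem_iff.2 ⟨A.2, mul_eq_one_comm.1 A.2⟩⟩,
      fun i hi => absurd i.2 (not_lt.2 hi)⟩,
    Continuous.subtype_mk (Continuous.subtype_mk continuous_subtype_val _) _⟩

end partF

/-- The covering type of the compact symplectic group `Sp(n)` is at least
`(8n³+9n²+7n+12)/6`: every good cover of any space homotopy equivalent to `Sp(n)` has at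
least that many members.  (The numerator is divisible by 6, so `/` is exact.) -/
theorem stmt11 (n : ℕ) (hn : 2 ≤ n) (Y : Type*) [TopologicalSpace Y]
    (h : Nonempty (ContinuousMap.HomotopyEquiv (Sp n) Y))
    (U : Finset (Set Y)) (hU : IsGoodCover U) :
    (8 * n ^ 3 + 9 * n ^ 2 + 7 * n + 12) / 6 ≤ U.card := by
  obtain ⟨e⟩ := h
  refine CT.final n hn (e.toFun.comp (CT.toS n)) ((CT.fromS n).comp e.invFun) ?_ U hU.1 hU.2.1 hU.2.2
  have h1 : ((CT.fromS n).comp ((e.invFun.comp e.toFun).comp (CT.toS n))).Homotopic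
      ((CT.fromS n).comp ((ContinuousMap.id _).comp (CT.toS n))) :=
    (ContinuousMap.Homotopic.refl _).comp (e.left_inv.comp (ContinuousMap.Homotopic.refl _))
  exact h1
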